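/- arXiv:2004.03308 — 2 statements merged into one kernel-verified Lean document; each statement's English description precedes it below -/
import Mathlib

section
/- Let p and q be primes with q ≡ 1 (mod 4), let p* ∈ P*₋ have underlying prime p (so p* = -p with p ≡ 3 (mod 4), or p* ∈ {-4, -8}), assume p ≠ q, and let L = ℚ(√(p*·q)). Then 4 does not divide the class number h(L) if and only if one of the following holds: (1) p is odd and the Legendre symbols satisfy (q/p) = (-p/q) = -1; (2) p = 2 and q ≡ 5 (mod 8). -/
open NumberField

/-- `Qsqrt m` is the subfield `ℚ(√m)` of `ℂ`, generated by a square root of `m`. -/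
noncomputable def Qsqrt (m : ℤ) : IntermediateField ℚ ℂ :=
  IntermediateField.adjoin ℚ {(m : ℂ) ^ ((1 : ℂ) / 2)}

open scoped Pointwise nonZeroDivisors

/-!
The field is `K = ℚ(√(m q))` with `m` the squarefree part of `p*`. Its discriminant has exactly the
prime divisors `p` and `q`. An ambiguous class contains an ideal fixed by the nontrivial
automorphism, because norms are nonnegative, and a fixed ideal is a product of rational numbers and
ramified primes; since the primes above `p` and `q` are linked by `(√(m q))`, every class of order
two is the class of the prime `P` above `p`. Hence squares have index at most two in the class
group, and as soon as some class is not a square, `4` divides the class number exactly when the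
class of `P` is a square.

The genus character `I ↦ (N I / q)` decides this. It is trivial on squares because
`x ^ 2 - m q y ^ 2 = k z ^ 2` forces `k` to be a square modulo `q`, and it is nontrivial because, by
Dirichlet's theorem and quadratic reciprocity, some split prime `l` is a nonresidue modulo `q`.
So `4` divides the class number if and only if `N P = p` is a square modulo `q`.
-/

section TwoPart

variable {G : Type*} [CommGroup G] {t : G}

theorem eq_one_or_eq_of_mem_zpowers (ht : t ^ 2 = 1) {c : G} (hc : c ∈ Subgroup.zpowers t) :
    c = 1 ∨ c = t := by
  obtain ⟨n, rfl⟩ := Subgroup.mem_zpowers_iff.mp hc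
  rcases n.even_or_odd' with ⟨k, rfl | rfl⟩
  · exact .inl (by rw [zpow_mul, zpow_ofNat, ht, one_zpow])
  · exact .inr (by rw [zpow_add_one, zpow_mul, zpow_ofNat, ht, one_zpow, one_mul])

variable [Finite G]

theorem index_square_le_two (h : ∀ c : G, c ^ 2 = 1 → c = 1 ∨ c = t) :
    (Subgroup.square G).index ≤ 2 := by
  have hrange : Subgroup.square G = (powMonoidHom 2 : G →* G).range := by
    ext x
    simp only [Subgroup.mem_square, isSquare_iff_exists_sq, MonoidHom.mem_range,
      powMonoidHom_apply, eq_comm]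
  have hker : ((powMonoidHom 2 : G →* G).ker : Set G) ⊆ {1, t} := fun c hc ↦ by
    simpa using h c hc
  calc (Subgroup.square G).index = ((powMonoidHom 2 : G →* G).ker : Set G).ncard := by
        rw [hrange, Subgroup.index_range, ← Nat.card_coe_set_eq]; rfl
    _ ≤ ({1, t} : Set G).ncard := Set.ncard_le_ncard hker
    _ ≤ 2 := (Set.ncard_insert_le 1 {t}).trans_eq (by rw [Set.ncard_singleton])

theorem index_square_eq_two (h : ∀ c : G, c ^ 2 = 1 → c = 1 ∨ c = t) {x : G} (hx : ¬IsSquare x) :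
    (Subgroup.square G).index = 2 := by
  have hne_one : (Subgroup.square G).index ≠ 1 := fun h1 ↦
    hx (Subgroup.mem_square.mp (Subgroup.index_eq_one.mp h1 ▸ Subgroup.mem_top x))
  have hne_zero : (Subgroup.square G).index ≠ 0 := Subgroup.index_ne_zero_of_finite
  have hle := index_square_le_two h
  omega

theorem isSquare_mul_of_sq_eq_one_imp (h : ∀ c : G, c ^ 2 = 1 → c = 1 ∨ c = t) {a b : G}
    (ha : ¬IsSquare a) (hb : ¬IsSquare b) : IsSquare (a * b) := by
  have hmul := Subgroup.mul_mem_iff_of_index_two (index_square_eq_two h ha) (a := a) (b := b)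
  simp only [Subgroup.mem_square] at hmul
  exact hmul.mpr (iff_of_false ha hb)

theorem exists_ne_one_sq_eq_one_of_even_card (H : Subgroup G) (h2 : 2 ∣ Nat.card H) :
    ∃ c ∈ H, c ≠ 1 ∧ c ^ 2 = 1 := by
  have : Fact (Nat.Prime 2) := ⟨Nat.prime_two⟩
  obtain ⟨c, hc⟩ := exists_prime_orderOf_dvd_card' (G := H) 2 h2
  obtain ⟨hc2, hc1⟩ := orderOf_eq_prime_iff.mp hc
  exact ⟨c, c.2, by exact_mod_cast hc1, by exact_mod_cast hc2⟩

theorem four_dvd_card_iff_isSquare (ht : t ^ 2 = 1) (h : ∀ c : G, c ^ 2 = 1 → c = 1 ∨ c = t)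
    {x : G} (hx : ¬IsSquare x) : 4 ∣ Nat.card G ↔ IsSquare t := by
  have hcard : Nat.card (Subgroup.square G) * 2 = Nat.card G := by
    rw [← index_square_eq_two h hx, Subgroup.card_mul_index]
  constructor
  · intro h4
    obtain ⟨c, hc, hc1, hc2⟩ :=
      exists_ne_one_sq_eq_one_of_even_card (Subgroup.square G) (by omega)
    exact (h c hc2).resolve_left hc1 ▸ Subgroup.mem_square.mp hc
  · rintro ⟨u, rfl⟩
    obtain ⟨c, -, hc1, hc2⟩ := exists_ne_one_sq_eq_one_of_even_card (⊤ : Subgroup G)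
      (by rw [Subgroup.card_top, ← hcard]; exact dvd_mul_left 2 _)
    have hu1 : u * u ≠ 1 := (h c hc2).resolve_left hc1 ▸ hc1
    have hu : orderOf u = 2 ^ (1 + 1) :=
      orderOf_eq_prime_pow (by simpa [sq] using hu1) (by simpa [pow_succ, mul_assoc] using ht)
    exact (by simpa using hu : orderOf u = 4) ▸ orderOf_dvd_natCard u

end TwoPart

section SpanPair

variable {R : Type*} [CommRing R]

theorem span_pair_mul_span_pair_eq_span_singleton {a e x y : R} (h : x * y = a * e)
    {t u v w : R} (hone : t * a + u * x + v * y + w * e = 1) :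
    Ideal.span {a, x} * Ideal.span {a, y} = Ideal.span {a} := by
  have htop : Ideal.span {a, y, x, e} = ⊤ := by
    rw [Ideal.eq_top_iff_one, ← hone]
    refine add_mem (add_mem (add_mem ?_ ?_) ?_) ?_ <;>
      exact Ideal.mul_mem_left _ _ (Ideal.subset_span (by simp))
  rw [Ideal.span_pair_mul_span_pair, h, mul_comm x a]
  calc Ideal.span {a * a, a * y, a * x, a * e}
      = Ideal.span {a} * Ideal.span {a, y, x, e} := by
        simp only [Ideal.span_mul_span', Set.singleton_mul, Set.image_insert_eq,
          Set.image_singleton]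
    _ = Ideal.span {a} := by rw [htop, Ideal.mul_top]

theorem sq_span_pair_eq_span_singleton {a e s : R} (h : s ^ 2 = a * e) (hcop : IsCoprime a e) :
    Ideal.span {a, s} ^ 2 = Ideal.span {a} := by
  obtain ⟨u, v, huv⟩ := hcop
  rw [sq]
  exact span_pair_mul_span_pair_eq_span_singleton (by rw [← sq, h]) (t := u) (u := 0) (v := 0)
    (w := v) (by linear_combination huv)

theorem sq_span_two_one_sub_eq {s k : R} (h : s ^ 2 = -(4 * k + 1)) :
    Ideal.span {2, 1 - s} ^ 2 = Ideal.span {2} := by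
  rw [sq]
  exact span_pair_mul_span_pair_eq_span_singleton (e := -2 * k - s) (by linear_combination h)
    (t := -k) (u := 1) (v := 0) (w := -1) (by ring)

end SpanPair

section SquaresModPrime

theorem isSquare_mul_of_not_isSquare {F : Type*} [Field F] [Finite F] {a b : F}
    (ha : ¬IsSquare a) (hb : ¬IsSquare b) : IsSquare (a * b) := by
  classical
  have := Fintype.ofFinite F
  have hab : a * b ≠ 0 :=
    mul_ne_zero (fun h ↦ ha (h ▸ IsSquare.zero)) fun h ↦ hb (h ▸ IsSquare.zero)
  rw [← quadraticChar_one_iff_isSquare hab, map_mul,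
    (quadraticChar_neg_one_iff_not_isSquare).mpr ha,
    (quadraticChar_neg_one_iff_not_isSquare).mpr hb, neg_one_mul, neg_neg]

theorem isSquare_neg_iff {R : Type*} [CommRing R] (h : IsSquare (-1 : R)) {a : R} :
    IsSquare (-a) ↔ IsSquare a := by
  constructor <;> intro ha
  · simpa using h.mul ha
  · simpa using h.mul ha

theorem coprime_of_not_isSquare {q x : ℕ} (hq : q.Prime) (hx : ¬IsSquare (x : ZMod q)) :
    x.Coprime q := by
  refine Nat.Coprime.symm ((Nat.Prime.coprime_iff_not_dvd hq).mpr fun h ↦ hx ?_)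
  rw [(ZMod.natCast_eq_zero_iff x q).mpr h]
  exact IsSquare.zero

theorem exists_prime_modEq_not_isSquare {N c q : ℕ} (hN : N ≠ 0) (hc : c.Coprime N) (hq : q.Prime)
    (hq2 : q ≠ 2) (hqN : N.Coprime q) :
    ∃ l : ℕ, l.Prime ∧ l ≡ c [MOD N] ∧ ¬IsSquare (l : ZMod q) := by
  have : Fact q.Prime := ⟨hq⟩
  obtain ⟨n, hn⟩ := FiniteField.exists_nonsquare (F := ZMod q) (by rwa [ZMod.ringChar_zmod_n])
  obtain ⟨x, hxN, hxq⟩ := Nat.chineseRemainder hqN c n.val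
  have hxn : (x : ZMod q) = n := by
    rw [(ZMod.natCast_eq_natCast_iff x n.val q).mpr hxq, ZMod.natCast_zmod_val]
  have hx_coprime : x.Coprime (N * q) := Nat.Coprime.mul_right (hxN.gcd_eq.trans hc)
    (coprime_of_not_isSquare hq (by rwa [hxn]))
  obtain ⟨l, -, hl, hlx⟩ := Nat.forall_exists_prime_gt_and_modEq 0
    (mul_ne_zero hN hq.ne_zero) hx_coprime
  refine ⟨l, hl, (Nat.ModEq.of_mul_right q hlx).trans hxN, ?_⟩
  rwa [(ZMod.natCast_eq_natCast_iff l x q).mpr (Nat.ModEq.of_mul_left N hlx), hxn]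

theorem isSquare_of_sq_sub_mul_sq_eq {q : ℕ} (hq : q.Prime) {m : ℤ} (hm : ¬(q : ℤ) ∣ m)
    {a b k c : ℤ} (hc : c ≠ 0) (h : a ^ 2 - m * q * b ^ 2 = k * c ^ 2) :
    IsSquare (k : ZMod q) := by
  have : Fact q.Prime := ⟨hq⟩
  have hqZ : Prime (q : ℤ) := Nat.prime_iff_prime_int.mp hq
  induction hn : c.natAbs using Nat.strong_induction_on generalizing a b c with
  | h n ih =>
  by_cases hqc : (q : ℤ) ∣ c
  · obtain ⟨c, rfl⟩ := hqc
    obtain ⟨a, rfl⟩ : (q : ℤ) ∣ a :=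
      hqZ.dvd_of_dvd_pow (n := 2) ⟨m * b ^ 2 + k * q * c ^ 2, by linear_combination h⟩
    have hmb : q * (m * b ^ 2) = q * (q * (a ^ 2 - k * c ^ 2)) := by linear_combination -h
    obtain ⟨b, rfl⟩ : (q : ℤ) ∣ b := hqZ.dvd_of_dvd_pow (n := 2)
      ((hqZ.dvd_or_dvd ⟨_, mul_left_cancel₀ hqZ.ne_zero hmb⟩).resolve_left hm)
    have hc0 : c ≠ 0 := right_ne_zero_of_mul hc
    refine ih c.natAbs ?_ hc0 (a := a) (b := b) ?_ rfl
    · rw [← hn, Int.natAbs_mul, Int.natAbs_natCast]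
      exact lt_mul_of_one_lt_left (Int.natAbs_pos.mpr hc0) hq.one_lt
    · exact mul_left_cancel₀ (pow_ne_zero 2 hqZ.ne_zero) (by linear_combination h)
  · have hcq : (c : ZMod q) ≠ 0 := by rwa [Ne, ZMod.intCast_zmod_eq_zero_iff_dvd]
    have hmod := congrArg (Int.cast : ℤ → ZMod q) h
    push_cast at hmod
    rw [ZMod.natCast_self, mul_zero, zero_mul, sub_zero] at hmod
    exact ⟨a / c, by field_simp; exact hmod.symm⟩

theorem isSquare_of_ratCast_sq_sub_mul_sq_eq {q : ℕ} (hq : q.Prime) {m : ℤ} (hm : ¬(q : ℤ) ∣ m)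
    {a b : ℚ} {k c : ℤ} (hc : c ≠ 0) (h : a ^ 2 - m * q * b ^ 2 = k * c ^ 2) :
    IsSquare (k : ZMod q) := by
  refine isSquare_of_sq_sub_mul_sq_eq hq hm (a := a.num * b.den) (b := b.num * a.den)
    (c := c * (a.den * b.den)) (by simp [hc]) ?_
  rw [← a.num_div_den, ← b.num_div_den] at h
  field_simp at h
  exact_mod_cast (by linear_combination h :
    ((a.num * b.den) ^ 2 - m * q * (b.num * a.den) ^ 2 : ℚ) = k * (c * (a.den * b.den)) ^ 2)

theorem not_isSquare_two_iff {q : ℕ} [Fact q.Prime] (hq4 : q % 4 = 1) :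
    ¬IsSquare (2 : ZMod q) ↔ q % 8 = 5 := by
  rw [ZMod.exists_sq_eq_two_iff (by omega)]
  omega

theorem not_isSquare_iff_legendreSym_eq_neg_one {p q : ℕ} [Fact p.Prime] [Fact q.Prime]
    (hq4 : q % 4 = 1) (hp2 : p ≠ 2) :
    ¬IsSquare (p : ZMod q) ↔ legendreSym p q = -1 ∧ legendreSym q (-p) = -1 := by
  have hneg : IsSquare (-1 : ZMod q) := ZMod.exists_sq_eq_neg_one_iff.mpr (by omega)
  rw [legendreSym.eq_neg_one_iff, legendreSym.eq_neg_one_iff, Int.cast_neg, Int.cast_natCast,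
    Int.cast_natCast, isSquare_neg_iff hneg,
    ZMod.exists_sq_eq_prime_iff_of_mod_four_eq_one hq4 hp2, and_self]

end SquaresModPrime

/-- `IsPrimeDiscRadicand p m` says that `m` is the squarefree part of a negative prime
discriminant `p* ∈ P*₋` with underlying prime `p`, so that `p*` is `m` or `4 * m`. -/
inductive IsPrimeDiscRadicand : ℕ → ℤ → Prop
  | neg_one : IsPrimeDiscRadicand 2 (-1)
  | neg_two : IsPrimeDiscRadicand 2 (-2)
  | neg_prime {p : ℕ} (hp : p.Prime) (hp4 : p % 4 = 3) : IsPrimeDiscRadicand p (-p)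

namespace IsPrimeDiscRadicand

variable {p q : ℕ} {m : ℤ}

theorem exists_eq_sq_mul {pstar : ℤ} (hp : p.Prime)
    (hps : (p % 4 = 3 ∧ pstar = -(p : ℤ)) ∨ (p = 2 ∧ (pstar = -4 ∨ pstar = -8))) :
    ∃ m c : ℤ, IsPrimeDiscRadicand p m ∧ c ≠ 0 ∧ pstar = c ^ 2 * m := by
  rcases hps with ⟨hp4, rfl⟩ | ⟨rfl, rfl | rfl⟩
  · exact ⟨-p, 1, .neg_prime hp hp4, one_ne_zero, by ring⟩
  · exact ⟨-1, 2, .neg_one, two_ne_zero, by norm_num⟩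
  · exact ⟨-2, 2, .neg_two, two_ne_zero, by norm_num⟩

theorem prime : IsPrimeDiscRadicand p m → p.Prime
  | neg_one | neg_two => Nat.prime_two
  | neg_prime hp _ => hp

theorem neg (h : IsPrimeDiscRadicand p m) : m < 0 := by
  cases h with
  | neg_one | neg_two => decide
  | neg_prime hp _ => exact neg_neg_of_pos (by exact_mod_cast hp.pos)

theorem dvd (h : IsPrimeDiscRadicand p m) : m ∣ p := by
  cases h <;> simp

theorem not_dvd (h : IsPrimeDiscRadicand p m) (hq : q.Prime) (hpq : p ≠ q) : ¬(q : ℤ) ∣ m :=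
  fun hqm ↦ hpq.symm <|
    (Nat.prime_dvd_prime_iff_eq hq h.prime).mp (by exact_mod_cast hqm.trans h.dvd)

theorem exists_coprime_forall_not_isSquare (h : IsPrimeDiscRadicand p m) :
    ∃ c : ℕ, c.Coprime (4 * p) ∧
      ∀ l : ℕ, l.Prime → l ≡ c [MOD 4 * p] → ¬IsSquare (m : ZMod l) := by
  cases h with
  | neg_one =>
    refine ⟨3, by decide, fun l hl hlc ↦ ?_⟩
    have : Fact l.Prime := ⟨hl⟩
    rw [Int.cast_neg, Int.cast_one, ZMod.exists_sq_eq_neg_one_iff]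
    simp only [Nat.ModEq] at hlc
    omega
  | neg_two =>
    refine ⟨5, by decide, fun l hl hlc ↦ ?_⟩
    have : Fact l.Prime := ⟨hl⟩
    simp only [Nat.ModEq] at hlc
    rw [Int.cast_neg, Int.cast_ofNat, ZMod.exists_sq_eq_neg_two_iff (by omega)]
    omega
  | neg_prime hp hp4 =>
    have : Fact p.Prime := ⟨hp⟩
    have hp2 : p ≠ 2 := by omega
    have hcop : Nat.Coprime 4 p :=
      Nat.Coprime.pow_left 2 ((Nat.coprime_primes Nat.prime_two hp).mpr hp2.symm)
    obtain ⟨c, -, hc4, hcp⟩ := exists_prime_modEq_not_isSquare (N := 4) (c := 1) four_ne_zero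
      (by decide) hp hp2 hcop
    refine ⟨c, Nat.Coprime.mul_right (hc4.gcd_eq.trans (by decide))
      (coprime_of_not_isSquare hp hcp), fun l hl hlc ↦ ?_⟩
    have : Fact l.Prime := ⟨hl⟩
    have hl4 : l % 4 = 1 := (Nat.ModEq.of_mul_right p hlc).trans hc4
    have hlp : (l : ZMod p) = c :=
      (ZMod.natCast_eq_natCast_iff l c p).mpr (Nat.ModEq.of_mul_left 4 hlc)
    rwa [Int.cast_neg, Int.cast_natCast,
      isSquare_neg_iff (ZMod.exists_sq_eq_neg_one_iff.mpr (by omega)),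
      ZMod.exists_sq_eq_prime_iff_of_mod_four_eq_one hl4 hp2, hlp]

theorem exists_prime_not_isSquare (h : IsPrimeDiscRadicand p m) (hq : q.Prime) (hq2 : q ≠ 2)
    (hpq : p ≠ q) : ∃ l : ℕ, l.Prime ∧ ¬IsSquare (l : ZMod q) ∧ ¬IsSquare (m : ZMod l) := by
  obtain ⟨c, hc, hm⟩ := h.exists_coprime_forall_not_isSquare
  have hcop : (4 * p).Coprime q := Nat.Coprime.mul_left
    (Nat.Coprime.pow_left 2 ((Nat.coprime_primes Nat.prime_two hq).mpr hq2.symm))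
    ((Nat.coprime_primes h.prime hq).mpr hpq)
  obtain ⟨l, hl, hlc, hlq⟩ := exists_prime_modEq_not_isSquare
    (mul_ne_zero four_ne_zero h.prime.ne_zero) hc hq hq2 hcop
  exact ⟨l, hl, hlq, hm l hl hlc⟩

theorem eq_neg_one_or_eq_neg (h : IsPrimeDiscRadicand p m) :
    (p = 2 ∧ m = -1) ∨ m = -p := by
  cases h <;> simp

theorem isCoprime (h : IsPrimeDiscRadicand p m) (hq : q.Prime) (hpq : p ≠ q) :
    IsCoprime (q : ℤ) m :=
  (Nat.prime_iff_prime_int.mp hq).coprime_iff_not_dvd.mpr (h.not_dvd hq hpq)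

theorem mul_natCast_neg (h : IsPrimeDiscRadicand p m) (hq : q.Prime) : m * q < 0 :=
  mul_neg_of_neg_of_pos h.neg (by exact_mod_cast hq.pos)

theorem exists_sq_eq_span (h : IsPrimeDiscRadicand p m) (hq : q.Prime) (hq4 : q % 4 = 1)
    (hpq : p ≠ q) {R : Type*} [CommRing R] {s : R} (hs : s ^ 2 = ((m * q : ℤ) : R)) :
    ∃ P : Ideal R, P ^ 2 = Ideal.span {(p : R)} ∧
      ∃ k : ℕ, (P ^ k) ^ 2 = Ideal.span {(m : R)} := by
  rcases h.eq_neg_one_or_eq_neg with ⟨rfl, rfl⟩ | hmp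
  · obtain ⟨k, rfl⟩ : ∃ k, q = 4 * k + 1 := ⟨q / 4, by omega⟩
    exact ⟨Ideal.span {2, 1 - s}, sq_span_two_one_sub_eq (k := k) (by rw [hs]; push_cast; ring),
      0, by simp⟩
  · have hm := sq_span_pair_eq_span_singleton (hs.trans (Int.cast_mul m q))
      (by exact_mod_cast (h.isCoprime hq hpq).symm.intCast)
    refine ⟨_, hm.trans ?_, 1, by rw [pow_one, hm]⟩
    rw [hmp, Int.cast_neg, Ideal.span_singleton_neg, Int.cast_natCast]

theorem eq_or_eq_of_dvd (h : IsPrimeDiscRadicand p m) (hq : q.Prime) {l : ℕ} (hl : l.Prime)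
    {r : ℤ} (hr : r ∣ p) (hdvd : (l : ℤ) ∣ r ^ 2 * (m * q)) : l = p ∨ l = q := by
  have hlZ : Prime (l : ℤ) := Nat.prime_iff_prime_int.mp hl
  have hdvd_p {n : ℤ} (hln : (l : ℤ) ∣ n) (hn : n ∣ p) : l = p :=
    (Nat.prime_dvd_prime_iff_eq hl h.prime).mp (by exact_mod_cast hln.trans hn)
  rcases hlZ.dvd_or_dvd hdvd with hlr | hlmq
  · exact .inl (hdvd_p (hlZ.dvd_of_dvd_pow hlr) hr)
  rcases hlZ.dvd_or_dvd hlmq with hlm | hlq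
  · exact .inl (hdvd_p hlm h.dvd)
  · exact .inr ((Nat.prime_dvd_prime_iff_eq hl hq).mp (by exact_mod_cast hlq))

end IsPrimeDiscRadicand

section SemiringAction

variable {G R : Type*} [Monoid G] [CommRing R] [MulSemiringAction G R]

theorem smul_intCast_eq (g : G) (n : ℤ) : g • (n : R) = n :=
  map_intCast (MulSemiringAction.toRingHom G R g) n

theorem smul_natCast_eq (g : G) (n : ℕ) : g • (n : R) = n :=
  map_natCast (MulSemiringAction.toRingHom G R g) n

theorem smul_span_singleton (g : G) (x : R) : g • Ideal.span {x} = Ideal.span {g • x} := by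
  rw [Ideal.smul_closure, Set.smul_set_singleton]

end SemiringAction

section Galois

variable {K : Type*} [Field K] [NumberField K]

theorem span_natCast_injective :
    Function.Injective fun n : ℕ ↦ Ideal.span {(n : 𝓞 K)} := fun a b h ↦ by
  have hnorm := congrArg Ideal.absNorm h
  simp only [Ideal.absNorm_span_natCast] at hnorm
  exact Nat.pow_left_injective Module.finrank_pos.ne' hnorm

theorem intCast_dvd_intCast_iff {a b : ℤ} : (a : 𝓞 K) ∣ b ↔ a ∣ b := by
  refine ⟨fun h ↦ ?_, Int.cast_dvd_cast a b⟩
  have hnorm := map_dvd (Algebra.norm ℤ) h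
  rw [← eq_intCast (algebraMap ℤ (𝓞 K)), ← eq_intCast (algebraMap ℤ (𝓞 K)), Algebra.norm_algebraMap,
    Algebra.norm_algebraMap] at hnorm
  exact (Int.pow_dvd_pow_iff Module.finrank_pos.ne').mp hnorm

theorem exists_sub_intCast_mem {M : Ideal (𝓞 K)} (hM : (Ideal.absNorm M).Prime) (ω : 𝓞 K) :
    ∃ k : ℤ, ω - k ∈ M := by
  have : Fact (Ideal.absNorm M).Prime := ⟨hM⟩
  have hM_ne_top : M ≠ ⊤ := fun h ↦ hM.ne_one (Ideal.absNorm_eq_one_iff.mpr h)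
  have hcard : Nat.card (𝓞 K ⧸ M) = Ideal.absNorm M := by
    rw [Ideal.absNorm_apply, Submodule.cardQuot_apply]
  have hone : Ideal.Quotient.mk M 1 ≠ 0 := fun h ↦
    hM_ne_top ((Ideal.eq_top_iff_one M).mpr (Ideal.Quotient.eq_zero_iff_mem.mp h))
  have hω : Ideal.Quotient.mk M ω ∈ AddSubgroup.zmultiples (Ideal.Quotient.mk M 1) :=
    zmultiples_eq_top_of_prime_card hcard hone ▸ AddSubgroup.mem_top _
  obtain ⟨k, hk⟩ := AddSubgroup.mem_zmultiples_iff.mp hω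
  refine ⟨k, Ideal.Quotient.eq_zero_iff_mem.mp ?_⟩
  rw [map_sub, ← hk, map_intCast, map_one, zsmul_one, sub_self]

theorem sub_smul_mem_of_fixed {g : Gal(K/ℚ)} {M : Ideal (𝓞 K)} (hM : (Ideal.absNorm M).Prime)
    (hfix : g • M = M) (ω : 𝓞 K) : ω - g • ω ∈ M := by
  obtain ⟨k, hk⟩ := exists_sub_intCast_mem hM ω
  have hgk : g • (ω - k) ∈ M := hfix ▸ Ideal.smul_mem_pointwise_smul g _ M hk
  rw [smul_sub, smul_intCast_eq] at hgk
  simpa using M.sub_mem hk hgk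

theorem coe_smul_eq_apply (g : Gal(K/ℚ)) (x : 𝓞 K) : ((g • x : 𝓞 K) : K) = g x :=
  algebraMap.coe_smul' g x K

theorem exists_pow_eq_span_singleton {I : Ideal (𝓞 K)} (hI : I ≠ ⊥) :
    ∃ n ≠ 0, ∃ x : 𝓞 K, I ^ n = Ideal.span {x} := by
  have hI0 : I ∈ (Ideal (𝓞 K))⁰ := mem_nonZeroDivisors_of_ne_zero hI
  have hpow : ClassGroup.mk0 (⟨I, hI0⟩ ^ Nat.card (ClassGroup (𝓞 K))) = 1 := by
    rw [map_pow, pow_card_eq_one']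
  exact ⟨_, Nat.card_pos.ne', ((ClassGroup.mk0_eq_one_iff _).mp hpow).principal⟩

variable [IsGalois ℚ K]

theorem prod_smul_eq_norm (x : 𝓞 K) :
    ∏ g : Gal(K/ℚ), g • x = ((Algebra.norm ℤ x : ℤ) : 𝓞 K) := by
  apply RingOfIntegers.coe_injective
  rw [map_prod, map_intCast]
  simp only [coe_smul_eq_apply, ← Algebra.norm_eq_prod_automorphisms, ← Algebra.coe_norm_int,
    map_intCast]

theorem prod_smul_ideal_eq_span_absNorm (I : Ideal (𝓞 K)) :
    ∏ g : Gal(K/ℚ), g • I = Ideal.span {(Ideal.absNorm I : 𝓞 K)} := by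
  rcases eq_or_ne I ⊥ with rfl | hI
  · simp only [Ideal.absNorm_bot, Nat.cast_zero, Ideal.span_singleton_zero]
    exact Finset.prod_eq_zero (Finset.mem_univ 1) (one_smul _ _)
  obtain ⟨n, hn, x, hx⟩ := exists_pow_eq_span_singleton hI
  apply pow_left_injective hn
  calc (∏ g : Gal(K/ℚ), g • I) ^ n
      = ∏ g : Gal(K/ℚ), Ideal.span {g • x} := by
        simp only [← Finset.prod_pow, ← smul_pow', hx, smul_span_singleton]
    _ = Ideal.span {(((Algebra.norm ℤ x).natAbs : ℤ) : 𝓞 K)} := by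
        rw [Ideal.prod_span_singleton, prod_smul_eq_norm, Ideal.span_singleton_eq_span_singleton]
        exact (Int.associated_natAbs _).map (Int.castRingHom (𝓞 K))
    _ = Ideal.span {(Ideal.absNorm I : 𝓞 K)} ^ n := by
        rw [← Ideal.absNorm_span_singleton, ← hx, map_pow, Int.cast_natCast, Nat.cast_pow,
          Ideal.span_singleton_pow]

end Galois

section IntegralSquareRoot

variable {K : Type*} [Field K] {D : ℤ} {s : 𝓞 K}

theorem coe_sq_eq_intCast (hs : s ^ 2 = D) : (s : K) ^ 2 = D := by
  simpa using congrArg (algebraMap (𝓞 K) K) hs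

theorem exists_two_mul_eq_one_add [CharZero K] (hs : s ^ 2 = D) (hD : D % 4 = 1) :
    ∃ ω : 𝓞 K, 2 * ω = 1 + s := by
  obtain ⟨k, hk⟩ : ∃ k, D = 4 * k + 1 := ⟨D / 4, by omega⟩
  have hs' : (s : K) ^ 2 = 4 * k + 1 := by
    rw [coe_sq_eq_intCast hs, hk]
    push_cast
    rfl
  have hint : IsIntegral ℤ ((1 + s : K) / 2) := by
    refine ⟨Polynomial.X ^ 2 - Polynomial.X - Polynomial.C k, by monicity!, ?_⟩
    rw [Polynomial.eval₂_sub, Polynomial.eval₂_sub, Polynomial.eval₂_X_pow, Polynomial.eval₂_X,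
      Polynomial.eval₂_C, eq_intCast]
    linear_combination hs' / 4
  exact ⟨⟨_, hint⟩, RingOfIntegers.coe_injective (mul_div_cancel₀ (1 + s : K) two_ne_zero)⟩

theorem exists_integer_sq_eq_of_sq_eq_sq_mul [CharZero K] {x : K} {c : ℤ}
    (hc : c ≠ 0) (hx : x ^ 2 = ((c ^ 2 * D : ℤ) : K)) : ∃ s : 𝓞 K, s ^ 2 = D := by
  have hsq : (x / c) ^ 2 = (D : K) := by
    have hcK : (c : K) ≠ 0 := Int.cast_ne_zero.mpr hc
    rw [div_pow, hx]
    push_cast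
    field_simp
  have hint : IsIntegral ℤ (x / c) :=
    IsIntegral.of_pow two_pos (hsq ▸ isIntegral_algebraMap (R := ℤ) (x := D))
  obtain ⟨s, hs⟩ := (IsIntegralClosure.isIntegral_iff (A := 𝓞 K)).mp hint
  refine ⟨s, RingOfIntegers.coe_injective ?_⟩
  rw [map_pow, map_intCast, hs, hsq]

end IntegralSquareRoot

section Quadratic

variable {K : Type*} [Field K] [NumberField K] [Algebra.IsQuadraticExtension ℚ K]
  {σ : Gal(K/ℚ)}

theorem exists_galois_ne_one (K : Type*) [Field K] [NumberField K]
    [Algebra.IsQuadraticExtension ℚ K] : ∃ σ : Gal(K/ℚ), σ ≠ 1 := by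
  have hcard : 1 < Nat.card Gal(K/ℚ) := by
    rw [IsGalois.card_aut_eq_finrank, Algebra.IsQuadraticExtension.finrank_eq_two]
    exact one_lt_two
  have := Finite.one_lt_card_iff_nontrivial.mp hcard
  exact exists_ne 1

open Classical in
theorem univ_galois_eq_pair (hσ : σ ≠ 1) : Finset.univ = ({1, σ} : Finset Gal(K/ℚ)) := by
  refine (Finset.eq_of_subset_of_card_le (Finset.subset_univ _) ?_).symm
  rw [Finset.card_pair hσ.symm, Finset.card_univ, ← Nat.card_eq_fintype_card,
    IsGalois.card_aut_eq_finrank, Algebra.IsQuadraticExtension.finrank_eq_two]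

theorem prod_galois_eq_mul {M : Type*} [CommMonoid M] (hσ : σ ≠ 1) (f : Gal(K/ℚ) → M) :
    ∏ g, f g = f 1 * f σ := by
  classical rw [univ_galois_eq_pair hσ, Finset.prod_pair hσ.symm]

theorem galois_mul_self (σ : Gal(K/ℚ)) : σ * σ = 1 := by
  have hcard := pow_card_eq_one' (x := σ)
  rwa [IsGalois.card_aut_eq_finrank, Algebra.IsQuadraticExtension.finrank_eq_two, sq] at hcard

theorem norm_eq_mul_apply (hσ : σ ≠ 1) (x : K) : (Algebra.norm ℚ x : K) = x * σ x := by
  rw [← eq_ratCast (algebraMap ℚ K), Algebra.norm_eq_prod_automorphisms, prod_galois_eq_mul hσ,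
    AlgEquiv.one_apply]

theorem mul_smul_eq_span_absNorm (hσ : σ ≠ 1) (I : Ideal (𝓞 K)) :
    I * σ • I = Ideal.span {(Ideal.absNorm I : 𝓞 K)} := by
  rw [← prod_smul_ideal_eq_span_absNorm, prod_galois_eq_mul hσ, one_smul]

theorem exists_ratCast_eq_of_apply_eq (hσ : σ ≠ 1) {x : K} (hx : σ x = x) :
    ∃ r : ℚ, (r : K) = x := by
  classical
  refine (IsGalois.mem_range_algebraMap_iff_fixed x).mpr fun g ↦ ?_
  have hg := Finset.mem_univ g
  rw [univ_galois_eq_pair hσ, Finset.mem_insert, Finset.mem_singleton] at hg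
  rcases hg with rfl | rfl
  · rfl
  · exact hx

section SquareRoot

variable {D : ℚ} {s : K}

theorem apply_eq_neg_of_sq_eq (hσ : σ ≠ 1) (hs : s ^ 2 = (D : K)) (hD : ¬IsSquare D) :
    σ s = -s := by
  have hsq : σ s ^ 2 = s ^ 2 := by rw [← map_pow, hs, map_ratCast]
  refine (sq_eq_sq_iff_eq_or_eq_neg.mp hsq).resolve_left fun hfix ↦ hD ?_
  obtain ⟨r, rfl⟩ := exists_ratCast_eq_of_apply_eq hσ hfix
  exact ⟨r, by rw [← sq]; exact_mod_cast hs.symm⟩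

theorem exists_eq_add_mul_sqrt (hσ : σ ≠ 1) (hs : s ^ 2 = (D : K)) (hD : ¬IsSquare D) (x : K) :
    ∃ a b : ℚ, x = a + b * s := by
  have hσs := apply_eq_neg_of_sq_eq hσ hs hD
  have hσσx : σ (σ x) = x := DFunLike.congr_fun (galois_mul_self σ) x
  have hs0 : s ≠ 0 := by
    rintro rfl
    exact hD ⟨0, by simpa using hs.symm⟩
  obtain ⟨a, ha⟩ : ∃ a : ℚ, (a : K) = (x + σ x) / 2 :=
    exists_ratCast_eq_of_apply_eq hσ (by
      rw [map_div₀, map_add, hσσx, map_ofNat, add_comm])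
  obtain ⟨b, hb⟩ : ∃ b : ℚ, (b : K) = (x - σ x) / (2 * s) :=
    exists_ratCast_eq_of_apply_eq hσ (by
      rw [map_div₀, map_sub, map_mul, hσσx, map_ofNat, hσs, mul_neg,
        ← neg_sub, neg_div_neg_eq])
  exact ⟨a, b, by rw [ha, hb]; field_simp; ring⟩

theorem exists_norm_eq_sq_sub_mul_sq (hs : s ^ 2 = (D : K)) (hD : ¬IsSquare D) (x : K) :
    ∃ a b : ℚ, Algebra.norm ℚ x = a ^ 2 - D * b ^ 2 := by
  obtain ⟨σ, hσ⟩ := exists_galois_ne_one K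
  obtain ⟨a, b, rfl⟩ := exists_eq_add_mul_sqrt hσ hs hD x
  refine ⟨a, b, Rat.cast_injective (α := K) ?_⟩
  rw [norm_eq_mul_apply hσ, map_add, map_mul, apply_eq_neg_of_sq_eq hσ hs hD]
  push_cast [map_ratCast, ← hs]
  ring

theorem norm_nonneg_of_neg (hs : s ^ 2 = (D : K)) (hD : D < 0) (x : 𝓞 K) :
    0 ≤ Algebra.norm ℤ x := by
  obtain ⟨a, b, hab⟩ := exists_norm_eq_sq_sub_mul_sq hs (fun hsq ↦ hD.not_ge hsq.nonneg) (x : K)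
  rw [← Int.cast_nonneg_iff (R := ℚ), Algebra.coe_norm_int, hab]
  nlinarith [sq_nonneg a, mul_nonneg (neg_nonneg.mpr hD.le) (sq_nonneg b)]

end SquareRoot

theorem mul_smul_eq_norm (hσ : σ ≠ 1) (x : 𝓞 K) : x * σ • x = ((Algebra.norm ℤ x : ℤ) : 𝓞 K) := by
  rw [← prod_smul_eq_norm, prod_galois_eq_mul hσ, one_smul]

theorem exists_fixed_dvd (hσ : σ ≠ 1) {I : Ideal (𝓞 K)} (hI : I ≠ ⊤) (hfix : σ • I = I) :
    ∃ F : Ideal (𝓞 K), F ∣ I ∧ F ≠ ⊤ ∧ σ • F = F ∧ (F.IsPrime ∨ F.IsPrincipal) := by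
  obtain ⟨M, hM, hIM⟩ := Ideal.exists_le_maximal I hI
  by_cases hMfix : σ • M = M
  · exact ⟨M, Ideal.dvd_iff_le.mpr hIM, hM.ne_top, hMfix, .inl hM.isPrime⟩
  have hσM : (σ • M).IsMaximal := by
    rw [Ideal.pointwise_smul_eq_comap]
    exact Ideal.comap_isMaximal_of_equiv _
  have hIσM : I ≤ σ • M := hfix ▸ Ideal.pointwise_smul_le_pointwise_smul_iff.mpr hIM
  have hcop : IsCoprime M (σ • M) :=
    Ideal.isCoprime_iff_sup_eq.mpr (hM.coprime_of_ne hσM (Ne.symm hMfix))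
  have hprod := mul_smul_eq_span_absNorm hσ M
  refine ⟨M * σ • M, hcop.mul_dvd (Ideal.dvd_iff_le.mpr hIM) (Ideal.dvd_iff_le.mpr hIσM), ?_, ?_,
    .inr ⟨_, hprod⟩⟩
  · exact fun htop ↦ hM.ne_top (top_le_iff.mp (htop.ge.trans Ideal.mul_le_left))
  · rw [hprod, smul_span_singleton, smul_natCast_eq]

theorem mk0_mem_of_fixed (hσ : σ ≠ 1) {H : Subgroup (ClassGroup (𝓞 K))}
    (hH : ∀ M : (Ideal (𝓞 K))⁰, (M : Ideal (𝓞 K)).IsPrime → σ • (M : Ideal (𝓞 K)) = M →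
      ClassGroup.mk0 M ∈ H)
    (I : (Ideal (𝓞 K))⁰) (hI : σ • (I : Ideal (𝓞 K)) = I) : ClassGroup.mk0 I ∈ H := by
  obtain ⟨I, hI0⟩ := I
  induction I using IsNoetherian.induction with
  | hgt I ih =>
  rcases eq_or_ne I ⊤ with rfl | htop
  · exact (ClassGroup.mk0_eq_one_iff hI0).mpr top_isPrincipal ▸ H.one_mem
  obtain ⟨F, ⟨J, rfl⟩, hF, hFfix, hF'⟩ := exists_fixed_dvd hσ htop hI
  have hFJ : F ∈ (Ideal (𝓞 K))⁰ ∧ J ∈ (Ideal (𝓞 K))⁰ := mul_mem_nonZeroDivisors.mp hI0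
  have hF0 := nonZeroDivisors.ne_zero hFJ.1
  have hJ0 := nonZeroDivisors.ne_zero hFJ.2
  have hJfix : σ • J = J := mul_left_cancel₀ hF0 (by rwa [← hFfix, ← smul_mul', hFfix])
  have hlt : F * J < J := lt_of_le_of_ne Ideal.mul_le_right fun heq ↦
    hF (mul_right_cancel₀ hJ0 (heq.trans (Ideal.top_mul J).symm))
  have hFH : ClassGroup.mk0 ⟨F, hFJ.1⟩ ∈ H := hF'.elim (fun hprime ↦ hH ⟨F, hFJ.1⟩ hprime hFfix)
    fun hprin ↦ (ClassGroup.mk0_eq_one_iff hFJ.1).mpr hprin ▸ H.one_mem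
  exact map_mul ClassGroup.mk0 ⟨F, hFJ.1⟩ ⟨J, hFJ.2⟩ ▸ H.mul_mem hFH (ih J hlt hFJ.2 hJfix)

theorem exists_fixed_mk0_eq (hσ : σ ≠ 1) (hnorm : ∀ x : 𝓞 K, 0 ≤ Algebra.norm ℤ x)
    {c : ClassGroup (𝓞 K)} (hc : c ^ 2 = 1) :
    ∃ I : (Ideal (𝓞 K))⁰, ClassGroup.mk0 I = c ∧ σ • (I : Ideal (𝓞 K)) = I := by
  obtain ⟨I, rfl⟩ := ClassGroup.mk0_surjective c
  have hinv := eq_inv_of_mul_eq_one_left ((sq _).symm.trans hc)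
  obtain ⟨x, -, hx⟩ := ClassGroup.mk0_eq_mk0_inv_iff.mp hinv
  set n := Ideal.absNorm (I : Ideal (𝓞 K))
  have hI0 := nonZeroDivisors.ne_zero I.2
  have hIσI : (I : Ideal (𝓞 K)) * σ • (I : Ideal (𝓞 K)) = Ideal.span {(n : 𝓞 K)} :=
    mul_smul_eq_span_absNorm hσ _
  have hxn : x * σ • x = (n : 𝓞 K) ^ 2 := by
    have hnat : (Algebra.norm ℤ x).natAbs = n ^ 2 := by
      rw [← Ideal.absNorm_span_singleton, ← hx, map_mul, sq]
    rw [mul_smul_eq_norm hσ, ← Int.natAbs_of_nonneg (hnorm x), hnat]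
    push_cast
    rfl
  by_cases hβ : x + n = 0
  · refine ⟨I, rfl, mul_left_cancel₀ hI0 ?_⟩
    rw [hIσI, hx, eq_neg_of_add_eq_zero_left hβ, Ideal.span_singleton_neg]
  · have hσβ : σ • (x + n) ≠ 0 := (smul_ne_zero_iff_ne σ).mpr hβ
    refine ⟨I * ⟨Ideal.span {σ • (x + n)}, by simpa using hσβ⟩, ?_, ?_⟩
    · rw [map_mul, (ClassGroup.mk0_eq_one_iff _).mpr ⟨_, rfl⟩, mul_one]
    · refine mul_left_cancel₀ hI0 ?_
      rw [Submonoid.coe_mul, smul_mul', smul_span_singleton, ← mul_assoc, ← mul_assoc, hIσI, hx,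
        Ideal.span_singleton_mul_span_singleton, Ideal.span_singleton_mul_span_singleton]
      congr 2
      rw [smul_add, smul_add, smul_smul, galois_mul_self, one_smul, smul_natCast_eq,
        smul_natCast_eq, mul_add, mul_add, hxn]
      ring

theorem absNorm_eq_of_sq_eq_span {I : Ideal (𝓞 K)} {n : ℕ} (hI : I ^ 2 = Ideal.span {(n : 𝓞 K)}) :
    Ideal.absNorm I = n := by
  have hnorm := congrArg Ideal.absNorm hI
  rw [map_pow, Ideal.absNorm_span_natCast, RingOfIntegers.rank,
    Algebra.IsQuadraticExtension.finrank_eq_two] at hnorm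
  exact Nat.pow_left_injective two_ne_zero hnorm

theorem isPrincipal_or_sq_eq_span_prime_of_fixed (hσ : σ ≠ 1) {M : Ideal (𝓞 K)} (hM : M.IsPrime)
    (hM0 : M ≠ ⊥) (hfix : σ • M = M) :
    M.IsPrincipal ∨ ∃ l : ℕ, l.Prime ∧ M ^ 2 = Ideal.span {(l : 𝓞 K)} := by
  have hMsq : M ^ 2 = Ideal.span {(Ideal.absNorm M : 𝓞 K)} := by
    rw [← mul_smul_eq_span_absNorm hσ, hfix, sq]
  obtain ⟨l, hl, hlM⟩ := Nat.exists_prime_and_dvd (Ideal.absNorm_eq_one_iff.not.mpr hM.ne_top)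
  have hdvd : Ideal.span {(l : 𝓞 K)} ∣ M ^ 2 := by
    rw [hMsq, Ideal.dvd_span_singleton, Ideal.mem_span_singleton]
    exact Nat.cast_dvd_cast hlM
  obtain ⟨i, hi, hass⟩ := (dvd_prime_pow (Ideal.prime_of_isPrime hM0 hM) 2).mp hdvd
  rw [associated_iff_eq] at hass
  interval_cases i
  · have hone : l = 1 := span_natCast_injective (K := K) (by simpa using hass)
    exact absurd hone hl.ne_one
  · exact .inl ⟨l, by rw [← pow_one M, ← hass]⟩
  · exact .inr ⟨l, hl, hass.symm⟩

theorem dvd_of_fixed_of_sq_eq_span {M : Ideal (𝓞 K)} {l : ℕ} (hl : l.Prime) (hfix : σ • M = M)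
    (hM : M ^ 2 = Ideal.span {(l : 𝓞 K)}) {ω : 𝓞 K} {Δ : ℤ} (hω : (ω - σ • ω) ^ 2 = Δ) :
    (l : ℤ) ∣ Δ := by
  have hmem := Ideal.pow_mem_pow
    (sub_smul_mem_of_fixed ((absNorm_eq_of_sq_eq_span hM).symm ▸ hl) hfix ω) 2
  rw [hω, hM, Ideal.mem_span_singleton] at hmem
  exact intCast_dvd_intCast_iff.mp (by exact_mod_cast hmem)

section IntegralSquareRoot

variable {D : ℤ} {s : 𝓞 K}

theorem smul_eq_neg_of_sq_eq (hσ : σ ≠ 1) (hs : s ^ 2 = D) (hD : ¬IsSquare D) : σ • s = -s := by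
  apply RingOfIntegers.coe_injective
  refine (coe_smul_eq_apply σ s).trans ((apply_eq_neg_of_sq_eq hσ (D := D) ?_ ?_).trans
    (map_neg _ s).symm)
  · rw [coe_sq_eq_intCast hs, Rat.cast_intCast]
  · rwa [Rat.isSquare_intCast_iff]

theorem exists_absNorm_eq_of_dvd_sq_sub (hs : s ^ 2 = D) (hD : ¬IsSquare D) {n : ℕ} {y : ℤ}
    (hcop : IsCoprime (n : ℤ) (2 * y)) (hy : (n : ℤ) ∣ y ^ 2 - D) :
    ∃ I : Ideal (𝓞 K), Ideal.absNorm I = n := by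
  obtain ⟨σ, hσ⟩ := exists_galois_ne_one K
  obtain ⟨e, he⟩ := hy
  obtain ⟨u, v, huv⟩ := hcop
  have hprod : Ideal.span {(n : 𝓞 K), y - s} * Ideal.span {(n : 𝓞 K), y + s} =
      Ideal.span {(n : 𝓞 K)} := by
    have he' : (y : 𝓞 K) ^ 2 - D = n * e := by exact_mod_cast congrArg (Int.cast : ℤ → 𝓞 K) he
    have huv' : (u : 𝓞 K) * n + v * (2 * y) = 1 := by
      exact_mod_cast congrArg (Int.cast : ℤ → 𝓞 K) huv
    exact span_pair_mul_span_pair_eq_span_singleton (e := (e : 𝓞 K))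
      (by linear_combination he' - hs) (t := u) (u := v) (v := v) (w := 0)
      (by linear_combination huv')
  have hconj : σ • Ideal.span {(n : 𝓞 K), y - s} = Ideal.span {(n : 𝓞 K), y + s} := by
    rw [Ideal.smul_closure, Set.smul_set_insert, Set.smul_set_singleton, smul_sub, smul_natCast_eq,
      smul_intCast_eq, smul_eq_neg_of_sq_eq hσ hs hD, sub_neg_eq_add]
  refine ⟨Ideal.span {(n : 𝓞 K), y - s}, span_natCast_injective (K := K) ?_⟩
  exact (mul_smul_eq_span_absNorm hσ _).symm.trans (hconj ▸ hprod)

theorem exists_absNorm_eq_prime_of_isSquare (hs : s ^ 2 = D) (hD : ¬IsSquare D) {l : ℕ}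
    (hl : l.Prime) (hl2 : l ≠ 2) (hlD : ¬(l : ℤ) ∣ D) (hsq : IsSquare (D : ZMod l)) :
    ∃ I : Ideal (𝓞 K), Ideal.absNorm I = l := by
  have hlZ : Prime (l : ℤ) := Nat.prime_iff_prime_int.mp hl
  obtain ⟨r, hr⟩ := hsq
  obtain ⟨y, rfl⟩ := ZMod.intCast_surjective r
  have hy : (l : ℤ) ∣ y ^ 2 - D := by
    rw [← ZMod.intCast_zmod_eq_zero_iff_dvd]
    push_cast
    rw [hr, sq, sub_self]
  have hly : ¬(l : ℤ) ∣ y := fun h ↦ hlD ((dvd_sub_right (dvd_pow h two_ne_zero)).mp hy)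
  have hl2' : ¬(l : ℤ) ∣ 2 := fun h ↦
    hl2 ((Nat.prime_dvd_prime_iff_eq hl Nat.prime_two).mp (by exact_mod_cast h))
  exact exists_absNorm_eq_of_dvd_sq_sub hs hD
    (hlZ.coprime_iff_not_dvd.mpr fun h ↦ (hlZ.dvd_or_dvd h).elim hl2' hly) hy

end IntegralSquareRoot

end Quadratic

section Genus

variable {K : Type*} [Field K] [NumberField K] [Algebra.IsQuadraticExtension ℚ K] {m : ℤ} {q : ℕ}
  {s : K}

theorem isSquare_absNorm_of_isSquare_mk0 (hq : q.Prime) (hm : m < 0) (hqm : ¬(q : ℤ) ∣ m)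
    (hs : s ^ 2 = ((m * q : ℤ) : K)) {I : (Ideal (𝓞 K))⁰} (hI : IsSquare (ClassGroup.mk0 I)) :
    IsSquare ((Ideal.absNorm (I : Ideal (𝓞 K)) : ℕ) : ZMod q) := by
  have hD : ((m * q : ℤ) : ℚ) < 0 := by
    exact_mod_cast mul_neg_of_neg_of_pos hm (by exact_mod_cast hq.pos)
  rw [← Rat.cast_intCast] at hs
  obtain ⟨c, hc⟩ := hI
  obtain ⟨J, hJ⟩ := ClassGroup.mk0_surjective c⁻¹
  have hIJ : ClassGroup.mk0 (I * J ^ 2) = 1 := by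
    rw [map_mul, map_pow, hc, hJ, ← sq, ← mul_pow, mul_inv_cancel, one_pow]
  obtain ⟨x, hx⟩ : ∃ x, (I : Ideal (𝓞 K)) * (J : Ideal (𝓞 K)) ^ 2 = Ideal.span {x} :=
    ((ClassGroup.mk0_eq_one_iff _).mp hIJ).principal
  obtain ⟨a, b, hab⟩ :=
    exists_norm_eq_sq_sub_mul_sq hs (fun hsq ↦ hD.not_ge hsq.nonneg) (x : K)
  have hnorm : Algebra.norm ℤ x = Ideal.absNorm (I : Ideal (𝓞 K)) *
      (Ideal.absNorm (J : Ideal (𝓞 K)) : ℤ) ^ 2 := by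
    rw [← Int.natAbs_of_nonneg (norm_nonneg_of_neg hs hD x), ← Ideal.absNorm_span_singleton, ← hx,
      map_mul, map_pow, Nat.cast_mul, Nat.cast_pow]
  have hJ0 : (Ideal.absNorm (J : Ideal (𝓞 K)) : ℤ) ≠ 0 :=
    Int.natCast_ne_zero.mpr (Ideal.absNorm_ne_zero_of_nonZeroDivisors J)
  rw [← Algebra.coe_norm_int, hnorm] at hab
  push_cast at hab
  exact_mod_cast isSquare_of_ratCast_sq_sub_mul_sq_eq hq hqm hJ0
    (k := Ideal.absNorm (I : Ideal (𝓞 K))) (by push_cast; exact hab.symm)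

end Genus

section TwoTorsion

theorem mk0_mem_zpowers_of_isPrincipal {R : Type*} [CommRing R] [IsDedekindDomain R]
    {P Q : (Ideal R)⁰} {k : ℕ} (h : ((Q * P ^ k : (Ideal R)⁰) : Ideal R).IsPrincipal) :
    ClassGroup.mk0 Q ∈ Subgroup.zpowers (ClassGroup.mk0 P) := by
  have hone : ClassGroup.mk0 Q * ClassGroup.mk0 P ^ k = 1 := by
    rw [← map_pow, ← map_mul]
    exact (ClassGroup.mk0_eq_one_iff _).mpr h
  rw [eq_inv_of_mul_eq_one_left hone]
  exact inv_mem (pow_mem (Subgroup.mem_zpowers _) k)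

variable {K : Type*} [Field K] [NumberField K] {σ : Gal(K/ℚ)} {p q : ℕ} {m : ℤ} {s : 𝓞 K}

theorem mem_nonZeroDivisors_of_sq_eq_span {I : Ideal (𝓞 K)} {n : ℕ} (hn : n ≠ 0)
    (hI : I ^ 2 = Ideal.span {(n : 𝓞 K)}) : I ∈ (Ideal (𝓞 K))⁰ := by
  refine mem_nonZeroDivisors_of_ne_zero (ne_zero_pow two_ne_zero ?_)
  rw [hI]
  simpa using hn

namespace IsPrimeDiscRadicand

theorem exists_sub_smul_eq_mul (h : IsPrimeDiscRadicand p m) (hq4 : q % 4 = 1)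
    (hs : s ^ 2 = ((m * q : ℤ) : 𝓞 K)) (hσ : σ • s = -s) :
    ∃ (ω : 𝓞 K) (r : ℤ), r ∣ p ∧ ω - σ • ω = r * s := by
  have htwo : ∃ (ω : 𝓞 K) (r : ℤ), r ∣ 2 ∧ ω - σ • ω = r * s :=
    ⟨s, 2, dvd_rfl, by rw [hσ]; push_cast; ring⟩
  cases h with
  | neg_one | neg_two => exact htwo
  | neg_prime hp hp4 =>
    have hD : -(p : ℤ) * q % 4 = 1 := by
      rw [Int.mul_emod, show -(p : ℤ) % 4 = 1 by omega, show (q : ℤ) % 4 = 1 by omega]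
      rfl
    obtain ⟨ω, hω⟩ := exists_two_mul_eq_one_add hs hD
    have hσω : 2 * σ • ω = 1 - s := by
      rw [← Nat.cast_ofNat, ← smul_natCast_eq σ, ← smul_mul', Nat.cast_ofNat, hω, smul_add, hσ,
        smul_one, sub_eq_add_neg]
    refine ⟨ω, 1, one_dvd _, mul_left_cancel₀ (two_ne_zero (α := 𝓞 K)) ?_⟩
    rw [mul_sub, hω, hσω]
    push_cast
    ring

theorem exists_mk0_mem_zpowers (h : IsPrimeDiscRadicand p m) (hq : q.Prime) (hq4 : q % 4 = 1)
    (hpq : p ≠ q) (hs : s ^ 2 = ((m * q : ℤ) : 𝓞 K)) :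
    ∃ P Q : (Ideal (𝓞 K))⁰, (P : Ideal (𝓞 K)) ^ 2 = Ideal.span {(p : 𝓞 K)} ∧
      (Q : Ideal (𝓞 K)) ^ 2 = Ideal.span {(q : 𝓞 K)} ∧
      ClassGroup.mk0 Q ∈ Subgroup.zpowers (ClassGroup.mk0 P) := by
  obtain ⟨P, hP, k, hPk⟩ := h.exists_sq_eq_span hq hq4 hpq hs
  have hQ : Ideal.span {(q : 𝓞 K), s} ^ 2 = Ideal.span {(q : 𝓞 K)} :=
    sq_span_pair_eq_span_singleton (e := (m : 𝓞 K)) (by rw [hs]; push_cast; ring)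
      (by exact_mod_cast (h.isCoprime hq hpq).intCast)
  have hQP : Ideal.span {(q : 𝓞 K), s} * P ^ k = Ideal.span {s} := by
    apply pow_left_injective two_ne_zero
    simp only [mul_pow, hQ, hPk, Ideal.span_singleton_mul_span_singleton,
      Ideal.span_singleton_pow, hs]
    push_cast
    rw [mul_comm]
  exact ⟨⟨P, mem_nonZeroDivisors_of_sq_eq_span h.prime.ne_zero hP⟩,
    ⟨_, mem_nonZeroDivisors_of_sq_eq_span hq.ne_zero hQ⟩, hP, hQ,
    mk0_mem_zpowers_of_isPrincipal (k := k) ⟨s, hQP⟩⟩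

end IsPrimeDiscRadicand

variable [Algebra.IsQuadraticExtension ℚ K]

theorem mem_zpowers_mk0_of_sq_eq_one (hσ : σ ≠ 1) (hnorm : ∀ x : 𝓞 K, 0 ≤ Algebra.norm ℤ x)
    {P Q : (Ideal (𝓞 K))⁰} (hP : (P : Ideal (𝓞 K)) ^ 2 = Ideal.span {(p : 𝓞 K)})
    (hQ : (Q : Ideal (𝓞 K)) ^ 2 = Ideal.span {(q : 𝓞 K)})
    (hPQ : ClassGroup.mk0 Q ∈ Subgroup.zpowers (ClassGroup.mk0 P)) {ω : 𝓞 K} {Δ : ℤ}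
    (hω : (ω - σ • ω) ^ 2 = Δ) (hΔ : ∀ l : ℕ, l.Prime → (l : ℤ) ∣ Δ → l = p ∨ l = q)
    {c : ClassGroup (𝓞 K)} (hc : c ^ 2 = 1) : c ∈ Subgroup.zpowers (ClassGroup.mk0 P) := by
  obtain ⟨I, rfl, hI⟩ := exists_fixed_mk0_eq hσ hnorm hc
  refine mk0_mem_of_fixed hσ (fun M hM hfix ↦ ?_) I hI
  rcases isPrincipal_or_sq_eq_span_prime_of_fixed hσ hM (nonZeroDivisors.ne_zero M.2) hfix with
    hprin | ⟨l, hl, hMl⟩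
  · exact (ClassGroup.mk0_eq_one_iff M.2).mpr hprin ▸ one_mem _
  rcases hΔ l hl (dvd_of_fixed_of_sq_eq_span hl hfix hMl hω) with rfl | rfl
  · have hMP : M = P := Subtype.ext (pow_left_injective two_ne_zero (hMl.trans hP.symm))
    exact hMP ▸ Subgroup.mem_zpowers _
  · have hMQ : M = Q := Subtype.ext (pow_left_injective two_ne_zero (hMl.trans hQ.symm))
    exact hMQ ▸ hPQ

namespace IsPrimeDiscRadicand

theorem exists_forall_mem_zpowers_mk0 (h : IsPrimeDiscRadicand p m) (hq : q.Prime)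
    (hq4 : q % 4 = 1) (hpq : p ≠ q) (hs : s ^ 2 = ((m * q : ℤ) : 𝓞 K)) :
    ∃ P : (Ideal (𝓞 K))⁰, (P : Ideal (𝓞 K)) ^ 2 = Ideal.span {(p : 𝓞 K)} ∧
      ∀ c : ClassGroup (𝓞 K), c ^ 2 = 1 → c ∈ Subgroup.zpowers (ClassGroup.mk0 P) := by
  obtain ⟨σ, hσ⟩ := exists_galois_ne_one K
  obtain ⟨P, Q, hP, hQ, hPQ⟩ := h.exists_mk0_mem_zpowers hq hq4 hpq hs
  obtain ⟨ω, r, hr, hω⟩ := h.exists_sub_smul_eq_mul hq4 hs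
    (smul_eq_neg_of_sq_eq hσ hs fun hsq ↦ (h.mul_natCast_neg hq).not_ge hsq.nonneg)
  have hnorm : ∀ x : 𝓞 K, 0 ≤ Algebra.norm ℤ x :=
    norm_nonneg_of_neg (D := (m * q : ℤ)) (s := (s : K))
      (by rw [coe_sq_eq_intCast hs, Rat.cast_intCast]) (by exact_mod_cast h.mul_natCast_neg hq)
  have hΔ : (ω - σ • ω) ^ 2 = ((r ^ 2 * (m * q) : ℤ) : 𝓞 K) := by
    rw [hω, mul_pow, hs]
    push_cast
    rfl
  exact ⟨P, hP, fun c hc ↦ mem_zpowers_mk0_of_sq_eq_one hσ hnorm hP hQ hPQ hΔ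
    (fun l hl ↦ h.eq_or_eq_of_dvd hq hl hr) hc⟩

theorem exists_absNorm_not_isSquare (h : IsPrimeDiscRadicand p m) (hq : q.Prime)
    (hq4 : q % 4 = 1) (hpq : p ≠ q) (hs : s ^ 2 = ((m * q : ℤ) : 𝓞 K)) :
    ∃ I : (Ideal (𝓞 K))⁰, ¬IsSquare (Ideal.absNorm (I : Ideal (𝓞 K)) : ZMod q) := by
  have : Fact q.Prime := ⟨hq⟩
  obtain ⟨l, hl, hlq, hlm⟩ := h.exists_prime_not_isSquare hq (by omega) hpq
  have : Fact l.Prime := ⟨hl⟩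
  have hl2 : l ≠ 2 := by
    rintro rfl
    exact hlm (FiniteField.isSquare_of_char_two (ZMod.ringChar_zmod_n 2) _)
  have hql : ¬IsSquare (q : ZMod l) := by
    rwa [← ZMod.exists_sq_eq_prime_iff_of_mod_four_eq_one hq4 hl2]
  have hD : ¬IsSquare (m * q : ℤ) := fun hsq ↦ (h.mul_natCast_neg hq).not_ge hsq.nonneg
  have hlD : ¬(l : ℤ) ∣ m * q := fun hdvd ↦ by
    have hzero : (m : ZMod l) * q = 0 := by
      exact_mod_cast (ZMod.intCast_zmod_eq_zero_iff_dvd (m * q) l).mpr hdvd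
    rcases mul_eq_zero.mp hzero with h0 | h0
    · exact hlm (h0 ▸ IsSquare.zero)
    · exact hql (h0 ▸ IsSquare.zero)
  obtain ⟨I, hI⟩ := exists_absNorm_eq_prime_of_isSquare hs hD hl hl2 hlD
    (by exact_mod_cast isSquare_mul_of_not_isSquare hlm hql)
  have hI0 : I ≠ ⊥ := fun hbot ↦ hl.ne_zero (by rw [← hI, hbot, Ideal.absNorm_bot])
  exact ⟨⟨I, mem_nonZeroDivisors_of_ne_zero hI0⟩, by rwa [hI]⟩

theorem four_dvd_card_classGroup_iff (h : IsPrimeDiscRadicand p m) (hq : q.Prime)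
    (hq4 : q % 4 = 1) (hpq : p ≠ q) (hs : s ^ 2 = ((m * q : ℤ) : 𝓞 K)) :
    4 ∣ Nat.card (ClassGroup (𝓞 K)) ↔ IsSquare (p : ZMod q) := by
  have : Fact q.Prime := ⟨hq⟩
  obtain ⟨P, hP, htors⟩ := h.exists_forall_mem_zpowers_mk0 hq hq4 hpq hs
  obtain ⟨I, hI⟩ := h.exists_absNorm_not_isSquare hq hq4 hpq hs
  have hgenus {J : (Ideal (𝓞 K))⁰} : IsSquare (ClassGroup.mk0 J) →
      IsSquare (Ideal.absNorm (J : Ideal (𝓞 K)) : ZMod q) :=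
    isSquare_absNorm_of_isSquare_mk0 hq h.neg (h.not_dvd hq hpq) (coe_sq_eq_intCast hs)
  have hPnorm := absNorm_eq_of_sq_eq_span hP
  have hPsq : ClassGroup.mk0 P ^ 2 = 1 := by
    rw [← map_pow]
    exact (ClassGroup.mk0_eq_one_iff _).mpr ⟨_, hP⟩
  have htors' (c : ClassGroup (𝓞 K)) (hc : c ^ 2 = 1) : c = 1 ∨ c = ClassGroup.mk0 P :=
    eq_one_or_eq_of_mem_zpowers hPsq (htors c hc)
  rw [four_dvd_card_iff_isSquare hPsq htors' (mt hgenus hI)]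
  refine ⟨fun hsq ↦ hPnorm ▸ hgenus hsq, fun hp ↦ by_contra fun hnsq ↦ hI ?_⟩
  have hp0 : (p : ZMod q) ≠ 0 := by
    rw [Ne, ZMod.natCast_eq_zero_iff, Nat.prime_dvd_prime_iff_eq hq h.prime]
    exact hpq.symm
  have hPI : IsSquare (ClassGroup.mk0 (P * I)) := by
    rw [map_mul]
    exact isSquare_mul_of_sq_eq_one_imp htors' hnsq (mt hgenus hI)
  have hpI := hgenus hPI
  rw [Submonoid.coe_mul, map_mul, hPnorm, Nat.cast_mul] at hpI
  simpa [mul_div_cancel_left₀ _ hp0] using hpI.div hp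

end IsPrimeDiscRadicand

end TwoTorsion

namespace Qsqrt

theorem cpow_half_sq (m : ℤ) : ((m : ℂ) ^ ((1 : ℂ) / 2)) ^ 2 = m := by
  rw [one_div]
  exact Complex.cpow_nat_inv_pow (m : ℂ) two_ne_zero

theorem isIntegral_cpow_half (m : ℤ) : IsIntegral ℚ ((m : ℂ) ^ ((1 : ℂ) / 2)) := by
  refine IsIntegral.of_pow two_pos ?_
  rw [cpow_half_sq, ← map_intCast (algebraMap ℚ ℂ)]
  exact isIntegral_algebraMap

instance numberField (m : ℤ) : NumberField (Qsqrt m) where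
  to_finiteDimensional := IntermediateField.adjoin.finiteDimensional (isIntegral_cpow_half m)

theorem exists_sq_eq (m : ℤ) : ∃ x : Qsqrt m, x ^ 2 = (m : Qsqrt m) :=
  ⟨⟨_, IntermediateField.mem_adjoin_simple_self ℚ _⟩, Subtype.ext (cpow_half_sq m)⟩

theorem isQuadraticExtension {m : ℤ} (hm : ¬IsSquare m) :
    Algebra.IsQuadraticExtension ℚ (Qsqrt m) where
  finrank_eq_two' := by
    set f : Polynomial ℚ := Polynomial.X ^ 2 - Polynomial.C (m : ℚ)
    have hf : Irreducible f := by
      refine (X_pow_sub_C_irreducible_iff_of_prime Nat.prime_two).mpr fun b hb ↦ hm ?_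
      exact Rat.isSquare_intCast_iff.mp ⟨b, by rw [← hb, sq]⟩
    have hmonic : f.Monic := Polynomial.monic_X_pow_sub_C _ two_ne_zero
    have hroot : Polynomial.aeval ((m : ℂ) ^ ((1 : ℂ) / 2)) f = 0 := by
      simp [f]
    rw [Qsqrt, IntermediateField.adjoin.finrank (isIntegral_cpow_half m),
      ← minpoly.eq_of_irreducible_of_monic hf hroot hmonic, Polynomial.natDegree_X_pow_sub_C]

end Qsqrt

theorem stmt16_general {K : Type*} [Field K] [NumberField K] [Algebra.IsQuadraticExtension ℚ K]
    {p q : ℕ} (hp : p.Prime) (hq : q.Prime) (hq4 : q % 4 = 1) {pstar : ℤ}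
    (hps : (p % 4 = 3 ∧ pstar = -(p : ℤ)) ∨ (p = 2 ∧ (pstar = -4 ∨ pstar = -8)))
    (hpq : p ≠ q) {x : K} (hx : x ^ 2 = ((pstar * q : ℤ) : K)) :
    ¬ (4 ∣ Nat.card (ClassGroup (𝓞 K))) ↔
      ((Odd p ∧ @legendreSym p ⟨hp⟩ q = -1 ∧ @legendreSym q ⟨hq⟩ (-(p : ℤ)) = -1) ∨
        (p = 2 ∧ q % 8 = 5)) := by
  have : Fact p.Prime := ⟨hp⟩
  have : Fact q.Prime := ⟨hq⟩
  obtain ⟨m, c, hm, hc, rfl⟩ := IsPrimeDiscRadicand.exists_eq_sq_mul hp hps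
  obtain ⟨s, hs⟩ := exists_integer_sq_eq_of_sq_eq_sq_mul hc (hx.trans (by rw [mul_assoc]))
  rw [hm.four_dvd_card_classGroup_iff hq hq4 hpq hs]
  rcases eq_or_ne p 2 with rfl | hp2
  · simpa [show ¬Odd 2 by decide] using not_isSquare_two_iff hq4
  · simpa [hp.odd_of_ne_two hp2, hp2] using not_isSquare_iff_legendreSym_eq_neg_one hq4 hp2

/-- Rédei-type criterion: for primes `p ≠ q` with `q ≡ 1 (mod 4)` and `p* ∈ P*₋` with
underlying prime `p` (so `p* = -p` with `p ≡ 3 (mod 4)`, or `p* ∈ {-4, -8}`), the class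
number of `L = ℚ(√(p*·q))` is not divisible by `4` iff either `p` is odd and
`(q/p) = (-p/q) = -1`, or `p = 2` and `q ≡ 5 (mod 8)`. -/
theorem stmt16 (p q : ℕ) (hp : p.Prime) (hq : q.Prime) (hq4 : q % 4 = 1)
    (pstar : ℤ)
    (hps : (p % 4 = 3 ∧ pstar = -(p : ℤ)) ∨ (p = 2 ∧ (pstar = -4 ∨ pstar = -8)))
    (hpq : p ≠ q)
    (L : IntermediateField ℚ ℂ) (hL : L = Qsqrt (pstar * q)) :
    ¬ (4 ∣ Nat.card (ClassGroup (𝓞 L))) ↔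
      ((Odd p ∧ @legendreSym p ⟨hp⟩ q = -1 ∧ @legendreSym q ⟨hq⟩ (-(p : ℤ)) = -1) ∨
        (p = 2 ∧ q % 8 = 5)) := by
  subst hL
  have hneg : pstar * q < 0 := mul_neg_of_neg_of_pos (by omega) (by exact_mod_cast hq.pos)
  have := Qsqrt.isQuadraticExtension fun hsq ↦ hneg.not_ge hsq.nonneg
  obtain ⟨x, hx⟩ := Qsqrt.exists_sq_eq (pstar * q)
  exact stmt16_general hp hq hq4 hps hpq hx
end

section
/- Let K/k be a Galois extension of number fields with Gal(K/k) ≅ V₄, Klein's four-group, and let k₁, k₂, k₃ be the three intermediate fields of K/k with [K : k_j] = [k_j : k] = 2. Writing h_odd(F) for the largest odd divisor of the class number h(F) of a number field F, one has h_odd(K) · h_odd(k)² = h_odd(k₁) · h_odd(k₂) · h_odd(k₃). (This is the cardinality form of the isomorphism Cl_odd(K) ≅ Cl_odd(k) × ∏_{j=1}^{3} Cl_odd(k_j)/Cl_odd(k), where Cl_odd denotes the subgroup of ideal classes of odd order.) -/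
open NumberField

/-- `hodd F` is the largest odd divisor of the class number of `F`,
i.e. the order of the odd part `Cl_odd(F)` of the class group. -/
noncomputable def hodd (F : Type*) [Field F] : ℕ :=
  Nat.card (ClassGroup (𝓞 F)) / 2 ^ (Nat.card (ClassGroup (𝓞 F))).factorization 2

/-!
Let `{1, σ, τ, στ}` act on a finite commutative group `M`. The product map
`M^σ × M^τ × M^{στ} → M` hits all squares, since `m² = (m · σm) (m · τm) (σm · τm)⁻¹`, and up to
squaring its kernel is the copy `{(a, b, (ab)⁻¹)}` of `M^G × M^G`. So
`|M| |M^G|² = |M^σ| |M^τ| |M^{στ}|` holds away from `2`.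

For a Galois extension `B / A` of Dedekind domains with group `G` of `p`-power order, the extension
map `Cl(A) → Cl(B)^G` has kernel and cokernel killed by `|G|`, because `N(𝔞B) = 𝔞^|G|` and
`N(𝔟)B = ∏ g • 𝔟`; hence `Cl(A)` and `Cl(B)^G` have the same order away from `p`. With `p = 2` this
identifies the factors above for `M = Cl(B)`.
-/

section PrimeToPPart

variable {p : ℕ} [Fact p.Prime] {A B : Type*} [CommGroup A] [CommGroup B]

theorem ordCompl_card_eq_one_of_forall_pow_eq_one [Finite A] {n : ℕ}
    (hA : ∀ a : A, a ^ p ^ n = 1) : ordCompl[p] (Nat.card A) = 1 := by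
  obtain ⟨k, -, hk⟩ := (Nat.dvd_prime_pow Fact.out).1 <|
    (card_dvd_exponent_pow_rank' A hA).trans (pow_mul p n _).symm.dvd
  rw [hk, Nat.ordCompl_self_pow Fact.out]

theorem ordCompl_card_eq_ker_mul [Finite B] {n : ℕ} (f : A →* B)
    (hf : ∀ b, b ^ p ^ n ∈ f.range) :
    ordCompl[p] (Nat.card A) = ordCompl[p] (Nat.card f.ker) * ordCompl[p] (Nat.card B) := by
  have hcoker : ordCompl[p] (Nat.card (B ⧸ f.range)) = 1 :=
    ordCompl_card_eq_one_of_forall_pow_eq_one fun b ↦ by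
      obtain ⟨b, rfl⟩ := QuotientGroup.mk_surjective b
      exact (QuotientGroup.eq_one_iff _).2 (hf b)
  rw [f.ker.card_eq_card_quotient_mul_card_subgroup,
    f.range.card_eq_card_quotient_mul_card_subgroup,
    Nat.card_congr (QuotientGroup.quotientKerEquivRange f).toEquiv, Nat.ordCompl_mul,
    Nat.ordCompl_mul, hcoker, one_mul, mul_comm]

theorem ordCompl_card_eq_of_monoidHom [Finite A] [Finite B] {m n : ℕ} (f : A →* B)
    (hker : ∀ a, f a = 1 → a ^ p ^ m = 1) (hf : ∀ b, b ^ p ^ n ∈ f.range) :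
    ordCompl[p] (Nat.card A) = ordCompl[p] (Nat.card B) := by
  have hker' : ordCompl[p] (Nat.card f.ker) = 1 :=
    ordCompl_card_eq_one_of_forall_pow_eq_one fun a ↦ Subtype.ext (hker a a.2)
  rw [ordCompl_card_eq_ker_mul f hf, hker', one_mul]

/-- The product map `(x, y, z) ↦ xyz` on three subgroups of a commutative group. -/
def prodThree (S₁ S₂ S₃ : Subgroup A) : S₁ × S₂ × S₃ →* A :=
  S₁.subtype.coprod (S₂.subtype.coprod S₃.subtype)

theorem prodThree_apply (S₁ S₂ S₃ : Subgroup A) (x : S₁) (y : S₂) (z : S₃) :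
    prodThree S₁ S₂ S₃ (x, y, z) = x * y * z :=
  (mul_assoc _ _ _).symm

/-- The embedding `(a, b) ↦ (a, b, (ab)⁻¹)` of `S × S` into the kernel of the product map on three
subgroups containing `S`. -/
def toKerProdThree {S S₁ S₂ S₃ : Subgroup A} (h₁ : S ≤ S₁) (h₂ : S ≤ S₂) (h₃ : S ≤ S₃) :
    S × S →* (prodThree S₁ S₂ S₃).ker where
  toFun ab := ⟨(Subgroup.inclusion h₁ ab.1, Subgroup.inclusion h₂ ab.2,
    Subgroup.inclusion h₃ (ab.1 * ab.2)⁻¹), by simp [MonoidHom.mem_ker, prodThree_apply]⟩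
  map_one' := by simp
  map_mul' a b := Subtype.ext <| Prod.ext rfl <| Prod.ext rfl <|
    (congrArg (Subgroup.inclusion h₃) (by
      rw [Prod.fst_mul, Prod.snd_mul, mul_mul_mul_comm, mul_inv])).trans (map_mul _ _ _)

theorem ordCompl_card_mul_ordCompl_card_sq [Finite A] {S S₁ S₂ S₃ : Subgroup A} {m n : ℕ}
    (h₁ : S ≤ S₁) (h₂ : S ≤ S₂) (h₃ : S ≤ S₃)
    (hrel : ∀ x ∈ S₁, ∀ y ∈ S₂, ∀ z ∈ S₃, x * y * z = 1 → x ^ p ^ m ∈ S ∧ y ^ p ^ m ∈ S)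
    (hprod : ∀ a : A, ∃ x ∈ S₁, ∃ y ∈ S₂, ∃ z ∈ S₃, x * y * z = a ^ p ^ n) :
    ordCompl[p] (Nat.card A) * ordCompl[p] (Nat.card S) ^ 2 =
      ordCompl[p] (Nat.card S₁) * ordCompl[p] (Nat.card S₂) * ordCompl[p] (Nat.card S₃) := by
  have hker : ordCompl[p] (Nat.card (S × S)) =
      ordCompl[p] (Nat.card (prodThree S₁ S₂ S₃).ker) := by
    refine ordCompl_card_eq_of_monoidHom (m := 0) (n := m) (toKerProdThree h₁ h₂ h₃) ?_ ?_
    · rintro ⟨a, b⟩ h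
      rw [pow_zero, pow_one]
      exact Prod.ext (Subtype.ext congr($h.1.1)) (Subtype.ext congr($h.1.2.1))
    · rintro ⟨⟨x, y, z⟩, h⟩
      rw [MonoidHom.mem_ker, prodThree_apply] at h
      obtain ⟨hx, hy⟩ := hrel x x.2 y y.2 z z.2 h
      refine ⟨(⟨x ^ p ^ m, hx⟩, ⟨y ^ p ^ m, hy⟩), Subtype.ext (Prod.ext rfl (Prod.ext rfl ?_))⟩
      refine Subtype.ext (inv_eq_of_mul_eq_one_right ?_)
      change (x : A) ^ p ^ m * (y : A) ^ p ^ m * (z : A) ^ p ^ m = 1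
      rw [← mul_pow, ← mul_pow, h, one_pow]
  have hA := ordCompl_card_eq_ker_mul (n := n) (prodThree S₁ S₂ S₃) fun a ↦ by
    obtain ⟨x, hx, y, hy, z, hz, h⟩ := hprod a
    exact ⟨(⟨x, hx⟩, ⟨y, hy⟩, ⟨z, hz⟩), (prodThree_apply ..).trans h⟩
  simp only [Nat.card_prod, Nat.ordCompl_mul] at hker hA
  rw [sq, hker, mul_comm, ← hA, mul_assoc]

end PrimeToPPart

section KleinFour

open FixedPoints

theorem exists_eq_zpowers_of_card_eq_prime {G : Type*} [Group G] {p : ℕ} [Fact p.Prime]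
    {H : Subgroup G} (hH : Nat.card H = p) : ∃ σ ≠ 1, H = Subgroup.zpowers σ := by
  have := isCyclic_of_prime_card hH
  obtain ⟨σ, rfl⟩ := H.isCyclic_iff_exists_zpowers_eq_top.1 this
  refine ⟨σ, ?_, rfl⟩
  rintro rfl
  exact (Fact.out : p.Prime).ne_one (by simpa using hH.symm)

theorem mem_fixedPoints_zpowers_iff {G M : Type*} [Group G] [Group M] [MulDistribMulAction G M]
    {σ : G} {m : M} : m ∈ subgroup (Subgroup.zpowers σ) M ↔ σ • m = m :=
  ⟨fun h ↦ h ⟨σ, Subgroup.mem_zpowers σ⟩, fun h g ↦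
    (Subgroup.zpowers_le (H := MulAction.stabilizer G m)).2 h g.2⟩

theorem isKleinFour_of_mulEquiv {G H : Type*} [Group G] [Group H] [IsKleinFour H] (e : G ≃* H) :
    IsKleinFour G where
  card_four := (Nat.card_congr e.toEquiv).trans IsKleinFour.card_four
  exponent_two := (Monoid.exponent_eq_of_mulEquiv e).trans IsKleinFour.exponent_two

variable {G M : Type*} [Group G] [IsKleinFour G] [CommGroup M] [MulDistribMulAction G M]

open IsKleinFour

theorem mem_fixedPoints_iff_of_ne {σ τ : G} (hσ : σ ≠ 1) (hτ : τ ≠ 1) (hne : σ ≠ τ) {m : M} :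
    m ∈ subgroup G M ↔ σ • m = m ∧ τ • m = m := by
  classical
  have := Fintype.ofFinite G
  have hG (g : G) : g = σ * τ ∨ g = σ ∨ g = τ ∨ g = 1 := by
    simpa using (eq_finset_univ hσ hτ hne).ge (Finset.mem_univ g)
  refine ⟨fun hm ↦ ⟨hm σ, hm τ⟩, fun ⟨hmσ, hmτ⟩ g ↦ ?_⟩
  obtain rfl | rfl | rfl | rfl := hG g <;> simp only [mul_smul, one_smul, hmσ, hmτ]

theorem exists_mul_mul_eq_sq (σ τ : G) (m : M) :
    ∃ x y z : M, σ • x = x ∧ τ • y = y ∧ (σ * τ) • z = z ∧ x * y * z = m ^ 2 := by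
  have hστσ : (σ * τ) • σ • m = τ • m := by
    rw [isMulCommutative.is_comm.comm σ τ, mul_smul, smul_smul σ σ, mul_self, one_smul]
  have hσττ : (σ * τ) • τ • m = σ • m := by rw [mul_smul, smul_smul τ τ, mul_self, one_smul]
  refine ⟨m * σ • m, m * τ • m, (σ • m * τ • m)⁻¹, ?_, ?_, ?_, ?_⟩
  · rw [smul_mul', smul_smul, mul_self, one_smul, mul_comm]
  · rw [smul_mul', smul_smul, mul_self, one_smul, mul_comm]
  · rw [smul_inv', smul_mul', hστσ, hσττ, mul_comm]
  · rw [mul_mul_mul_comm, mul_inv_cancel_right, sq]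

theorem smul_sq_eq_of_mul_mul_eq_one {σ τ : G} {x y z : M} (hx : σ • x = x) (hy : τ • y = y)
    (hz : (σ * τ) • z = z) (h : x * y * z = 1) : τ • x ^ 2 = x ^ 2 := by
  have hcomm : τ * σ = σ * τ := isMulCommutative.is_comm.comm τ σ
  have hτσy : τ • σ • y = σ • y := by rw [smul_smul, hcomm, mul_smul, hy]
  have hτσz : τ • σ • z = z := by rw [smul_smul, hcomm, hz]
  have hτz : τ • z = σ • z := by rw [← hτσz, smul_smul τ τ, mul_self, one_smul, hτσz]
  have hx2 : x ^ 2 = (y * σ • y * (z * σ • z))⁻¹ := by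
    have hxyz : x = (y * z)⁻¹ := eq_inv_of_mul_eq_one_left (by rwa [← mul_assoc])
    calc x ^ 2 = x * σ • x := by rw [hx, sq]
      _ = (y * σ • y * (z * σ • z))⁻¹ := by
        rw [hxyz, smul_inv', smul_mul', ← mul_inv, mul_mul_mul_comm]
  rw [hx2, smul_inv', smul_mul', smul_mul', smul_mul', hy, hτσy, hτz, hτσz, mul_comm z]

theorem ordCompl_two_card_mul_sq_fixedPoints [Finite M] {H₁ H₂ H₃ : Subgroup G}
    (h₁₂ : H₁ ≠ H₂) (h₁₃ : H₁ ≠ H₃) (h₂₃ : H₂ ≠ H₃)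
    (h₁ : Nat.card H₁ = 2) (h₂ : Nat.card H₂ = 2) (h₃ : Nat.card H₃ = 2) :
    ordCompl[2] (Nat.card M) * ordCompl[2] (Nat.card (subgroup G M)) ^ 2 =
      ordCompl[2] (Nat.card (subgroup H₁ M)) * ordCompl[2] (Nat.card (subgroup H₂ M)) *
        ordCompl[2] (Nat.card (subgroup H₃ M)) := by
  obtain ⟨σ, hσ, rfl⟩ := exists_eq_zpowers_of_card_eq_prime h₁
  obtain ⟨τ, hτ, rfl⟩ := exists_eq_zpowers_of_card_eq_prime h₂
  obtain ⟨ρ, hρ, rfl⟩ := exists_eq_zpowers_of_card_eq_prime h₃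
  have hστ : σ ≠ τ := fun h ↦ h₁₂ (h ▸ rfl)
  obtain rfl : ρ = σ * τ :=
    eq_mul_of_ne_all hσ hτ hστ hρ (fun h ↦ h₁₃ (h ▸ rfl)) (fun h ↦ h₂₃ (h ▸ rfl))
  refine ordCompl_card_mul_ordCompl_card_sq (m := 1) (n := 1) (fun _ hm g ↦ hm g)
    (fun _ hm g ↦ hm g) (fun _ hm g ↦ hm g) ?_ ?_ <;>
    simp only [mem_fixedPoints_zpowers_iff, mem_fixedPoints_iff_of_ne hσ hτ hστ, pow_one]
  · intro x hx y hy z hz h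
    refine ⟨⟨by rw [smul_pow', hx], smul_sq_eq_of_mul_mul_eq_one hx hy hz h⟩, ?_,
      by rw [smul_pow', hy]⟩
    rw [isMulCommutative.is_comm.comm σ τ] at hz
    exact smul_sq_eq_of_mul_mul_eq_one hy hx hz (by rwa [mul_comm y])
  · intro m
    obtain ⟨x, y, z, hx, hy, hz, h⟩ := exists_mul_mul_eq_sq σ τ m
    exact ⟨x, hx, y, hy, z, hz, h⟩

end KleinFour

section ClassGroupAction

open scoped nonZeroDivisors Pointwise

/-- The map on class groups induced by extending ideals along an injective ring homomorphism `f`.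
Unlike for `ClassGroup.extendedHom`, the two rings may coincide without `f` being the identity. -/
noncomputable def classGroupMap {R S : Type*} [CommRing R] [CommRing S] [IsDomain R] [IsDomain S]
    (f : R →+* S) (hf : Function.Injective f) : ClassGroup R →* ClassGroup S :=
  letI := f.toAlgebra
  haveI : FaithfulSMul R S := (faithfulSMul_iff_algebraMap_injective R S).2 hf
  ClassGroup.extendedHom R S

theorem classGroupMap_mk0 {R S : Type*} [CommRing R] [CommRing S] [IsDedekindDomain R]
    [IsDedekindDomain S] {f : R →+* S} (hf : Function.Injective f) {I : (Ideal R)⁰}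
    {J : (Ideal S)⁰} (hJ : I.1.map f = J) :
    classGroupMap f hf (ClassGroup.mk0 I) = ClassGroup.mk0 J :=
  letI := f.toAlgebra
  haveI : FaithfulSMul R S := (faithfulSMul_iff_algebraMap_injective R S).2 hf
  (ClassGroup.extendedHom_mk0 R S I).trans (congrArg _ (Subtype.ext hJ))

variable {G B : Type*} [Group G] [CommRing B] [IsDedekindDomain B] [MulSemiringAction G B]

/-- The action of a group of automorphisms of a Dedekind domain on the monoid of nonzero ideals. -/
instance mulActionNonzeroIdeal : MulAction G (Ideal B)⁰ where
  smul g I := ⟨g • I.1, mem_nonZeroDivisors_iff_ne_zero.2 <|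
    (smul_ne_zero_iff_ne g).2 (mem_nonZeroDivisors_iff_ne_zero.1 I.2)⟩
  one_smul I := Subtype.ext (one_smul G I.1)
  mul_smul g h I := Subtype.ext (mul_smul g h I.1)

/-- The action of a group of automorphisms of a Dedekind domain on its class group, by conjugation
of ideals. -/
noncomputable instance mulDistribMulActionClassGroup : MulDistribMulAction G (ClassGroup B) :=
  letI act (g : G) : ClassGroup B →* ClassGroup B :=
    classGroupMap (MulSemiringAction.toRingHom G B g) (MulAction.injective g)
  haveI act_mk0 (g : G) (I : (Ideal B)⁰) : act g (ClassGroup.mk0 I) = ClassGroup.mk0 (g • I) :=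
    classGroupMap_mk0 (MulAction.injective g) rfl
  { smul g := act g
    one_smul := ClassGroup.mk0_surjective.forall.2 fun I ↦
      (act_mk0 1 I).trans (by rw [one_smul])
    mul_smul g h := ClassGroup.mk0_surjective.forall.2 fun I ↦ by
      have : act (g * h) (ClassGroup.mk0 I) = act g (act h (ClassGroup.mk0 I)) := by
        simp only [act_mk0, mul_smul]
      exact this
    smul_one g := map_one _
    smul_mul g := map_mul _ }

theorem smul_mk0 (g : G) (I : (Ideal B)⁰) : g • ClassGroup.mk0 I = ClassGroup.mk0 (g • I) :=
  classGroupMap_mk0 (MulAction.injective g) rfl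

end ClassGroupAction

section GaloisExtension

open scoped nonZeroDivisors Pointwise

variable {A B : Type*} [CommRing A] [IsDedekindDomain A] [CommRing B] [IsDedekindDomain B]
  [Algebra A B] [Module.IsTorsionFree A B]

theorem smul_extendedHom {G : Type*} [Group G] [MulSemiringAction G B] [SMulCommClass G A B]
    (g : G) (c : ClassGroup A) :
    g • ClassGroup.extendedHom A B c = ClassGroup.extendedHom A B c := by
  obtain ⟨I, rfl⟩ := ClassGroup.mk0_surjective c
  rw [ClassGroup.extendedHom_mk0, smul_mk0]
  refine congrArg _ (Subtype.ext (Ideal.map_map _ _ |>.trans (congrArg (Ideal.map · I.1) ?_)))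
  exact RingHom.ext fun a ↦ smul_algebraMap g a

variable [Module.Finite A B]

theorem pow_finrank_eq_one_of_extendedHom_eq_one {c : ClassGroup A}
    (hc : ClassGroup.extendedHom A B c = 1) : c ^ Module.finrank A B = 1 := by
  obtain ⟨I, rfl⟩ := ClassGroup.mk0_surjective c
  rw [ClassGroup.extendedHom_mk0, ClassGroup.mk0_eq_one_iff] at hc
  obtain ⟨b, hb⟩ := hc
  rw [← map_pow]
  refine (ClassGroup.mk0_eq_one_iff (pow_mem I.2 _)).2 ⟨Algebra.intNorm A B b, ?_⟩
  rw [Ideal.submodule_span_eq, ← Ideal.relNorm_singleton, ← Ideal.submodule_span_eq, ← hb,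
    Ideal.relNorm_algebraMap]

variable (G : Type*) [Group G] [MulSemiringAction G B] [IsGaloisGroup G A B]

theorem algebraMap_intNorm_eq_prod_smul [Fintype G] (b : B) :
    algebraMap A B (Algebra.intNorm A B b) = ∏ g : G, g • b := by
  let := FractionRing.liftAlgebra A (FractionRing B)
  let := IsFractionRing.mulSemiringAction G B (FractionRing B)
  have := IsGaloisGroup.toFractionRing G A B
  have := IsGaloisGroup.isGalois G (FractionRing A) (FractionRing B)
  rw [Algebra.algebraMap_intNorm_of_isGalois,
    ← (IsGaloisGroup.mulEquivAlgEquiv G A B).toEquiv.prod_comp]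
  rfl

theorem map_relNorm_le_prod_smul [Fintype G] (I : Ideal B) :
    (Ideal.relNorm A I).map (algebraMap A B) ≤ ∏ g : G, g • I := by
  rw [Ideal.map_relNorm, Ideal.span_le]
  rintro _ ⟨b, hb, rfl⟩
  rw [Function.comp_apply, algebraMap_intNorm_eq_prod_smul G]
  exact Ideal.prod_mem_prod fun g _ ↦ Ideal.smul_mem_pointwise_smul g b I hb

theorem eq_of_le_of_relNorm_eq {I J : Ideal B} (hle : I ≤ J) (hI : I ≠ ⊥)
    (h : Ideal.relNorm A I = Ideal.relNorm A J) : I = J := by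
  obtain ⟨Q, rfl⟩ := Ideal.dvd_iff_le.2 hle
  have hJ : Ideal.relNorm A J ≠ 0 := by
    rwa [← h, Ideal.zero_eq_bot, Ne, Ideal.relNorm_eq_bot_iff]
  have hQ : Ideal.relNorm A Q = 1 := by rwa [map_mul, mul_eq_left₀ hJ] at h
  have hQ' : Q = ⊤ := by
    have := Ideal.relNorm_le_comap A Q
    rwa [hQ, Ideal.one_eq_top, top_le_iff, Ideal.comap_eq_top_iff] at this
  rw [hQ', Ideal.mul_top]

theorem prod_smul_eq_map_relNorm [Fintype G] (I : Ideal B) :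
    ∏ g : G, g • I = (Ideal.relNorm A I).map (algebraMap A B) := by
  obtain rfl | hI := eq_or_ne I 0
  · simp
  refine (eq_of_le_of_relNorm_eq (A := A) (map_relNorm_le_prod_smul G I) ?_ ?_).symm
  · exact mt (Ideal.map_eq_bot_iff_of_injective (FaithfulSMul.algebraMap_injective A B)).1
      (mt Ideal.relNorm_eq_bot_iff.1 hI)
  · simp [Ideal.relNorm_algebraMap, ← IsGaloisGroup.card_eq_finrank' G A B]

theorem pow_card_mem_range_extendedHom {c : ClassGroup B} (hc : ∀ g : G, g • c = c) :
    c ^ Nat.card G ∈ (ClassGroup.extendedHom A B).range := by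
  have := IsGaloisGroup.finite G A B
  have := Fintype.ofFinite G
  obtain ⟨I, rfl⟩ := ClassGroup.mk0_surjective c
  have hN : Ideal.relNorm A I.1 ∈ (Ideal A)⁰ := by
    rw [mem_nonZeroDivisors_iff_ne_zero, Ideal.zero_eq_bot, Ne, Ideal.relNorm_eq_bot_iff]
    exact mem_nonZeroDivisors_iff_ne_zero.1 I.2
  refine ⟨ClassGroup.mk0 ⟨_, hN⟩, ?_⟩
  calc ClassGroup.extendedHom A B (ClassGroup.mk0 ⟨_, hN⟩)
      = ClassGroup.mk0 (∏ g : G, g • I) := by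
        rw [ClassGroup.extendedHom_mk0]
        refine congrArg _ (Subtype.ext ?_)
        rw [Submonoid.coe_finsetProd]
        exact (prod_smul_eq_map_relNorm G I.1).symm
    _ = ClassGroup.mk0 I ^ Nat.card G := by
        simp only [map_prod, ← smul_mk0, hc, Finset.prod_const, Finset.card_univ,
          Nat.card_eq_fintype_card]

theorem ordCompl_card_classGroup_eq_fixedPoints [Finite (ClassGroup A)] [Finite (ClassGroup B)]
    {p n : ℕ} [Fact p.Prime] (hG : Nat.card G = p ^ n) :
    ordCompl[p] (Nat.card (ClassGroup A)) =
      ordCompl[p] (Nat.card (FixedPoints.subgroup G (ClassGroup B))) := by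
  have := IsGaloisGroup.finite G A B
  refine ordCompl_card_eq_of_monoidHom (m := n) (n := n)
    ((ClassGroup.extendedHom A B).codRestrict (FixedPoints.subgroup G (ClassGroup B))
      fun c g ↦ smul_extendedHom g c) (fun c hc ↦ ?_) (fun c ↦ ?_)
  · rw [← hG, IsGaloisGroup.card_eq_finrank' G A B]
    exact pow_finrank_eq_one_of_extendedHom_eq_one congr($hc.1)
  · obtain ⟨d, hd⟩ := pow_card_mem_range_extendedHom (A := A) G c.2
    exact ⟨d, Subtype.ext (hd.trans (by rw [hG]; rfl))⟩

theorem isGaloisGroup_subgroup_ringOfIntegers {G F L : Type*} [Group G] [Field F] [Field L]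
    [NumberField F] [NumberField L] [Algebra F L] [MulSemiringAction G L] (H : Subgroup G)
    [IsGaloisGroup H F L] : IsGaloisGroup H (𝓞 F) (𝓞 L) :=
  IsGaloisGroup.of_isFractionRing H (𝓞 F) (𝓞 L) F L

end GaloisExtension

theorem stmt19_general {G A A₁ A₂ A₃ B : Type*} [Group G] [IsKleinFour G]
    [CommRing A] [IsDedekindDomain A] [Finite (ClassGroup A)]
    [CommRing A₁] [IsDedekindDomain A₁] [Finite (ClassGroup A₁)]
    [CommRing A₂] [IsDedekindDomain A₂] [Finite (ClassGroup A₂)]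
    [CommRing A₃] [IsDedekindDomain A₃] [Finite (ClassGroup A₃)]
    [CommRing B] [IsDedekindDomain B] [Finite (ClassGroup B)]
    [Algebra A B] [Module.IsTorsionFree A B] [Module.Finite A B]
    [Algebra A₁ B] [Module.IsTorsionFree A₁ B] [Module.Finite A₁ B]
    [Algebra A₂ B] [Module.IsTorsionFree A₂ B] [Module.Finite A₂ B]
    [Algebra A₃ B] [Module.IsTorsionFree A₃ B] [Module.Finite A₃ B]
    [MulSemiringAction G B] [IsGaloisGroup G A B]
    {H₁ H₂ H₃ : Subgroup G}
    [IsGaloisGroup H₁ A₁ B] [IsGaloisGroup H₂ A₂ B] [IsGaloisGroup H₃ A₃ B]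
    (h₁₂ : H₁ ≠ H₂) (h₁₃ : H₁ ≠ H₃) (h₂₃ : H₂ ≠ H₃)
    (h₁ : Nat.card H₁ = 2) (h₂ : Nat.card H₂ = 2) (h₃ : Nat.card H₃ = 2) :
    ordCompl[2] (Nat.card (ClassGroup B)) * ordCompl[2] (Nat.card (ClassGroup A)) ^ 2 =
      ordCompl[2] (Nat.card (ClassGroup A₁)) * ordCompl[2] (Nat.card (ClassGroup A₂)) *
        ordCompl[2] (Nat.card (ClassGroup A₃)) := by
  rw [ordCompl_card_classGroup_eq_fixedPoints (A := A) (B := B) G (p := 2) (n := 2)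
      IsKleinFour.card_four,
    ordCompl_card_classGroup_eq_fixedPoints (A := A₁) (B := B) H₁ (p := 2) (n := 1) h₁,
    ordCompl_card_classGroup_eq_fixedPoints (A := A₂) (B := B) H₂ (p := 2) (n := 1) h₂,
    ordCompl_card_classGroup_eq_fixedPoints (A := A₃) (B := B) H₃ (p := 2) (n := 1) h₃]
  exact ordCompl_two_card_mul_sq_fixedPoints h₁₂ h₁₃ h₂₃ h₁ h₂ h₃

/-- Lemmermeyer: for a `V₄`-extension `K/k` of number fields with the three intermediate
fields `k₁, k₂, k₃`, one has `h_odd(K) · h_odd(k)² = h_odd(k₁) · h_odd(k₂) · h_odd(k₃)`,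
the cardinality form of `Cl_odd(K) ≅ Cl_odd(k) × ∏ⱼ Cl_odd(kⱼ)/Cl_odd(k)`. -/
theorem stmt19 (k K : Type*) [Field k] [Field K] [NumberField k] [NumberField K]
    [Algebra k K] [IsGalois k K]
    (hgal : Nonempty ((K ≃ₐ[k] K) ≃*
      (Multiplicative (ZMod 2) × Multiplicative (ZMod 2))))
    (k₁ k₂ k₃ : IntermediateField k K)
    (h12 : k₁ ≠ k₂) (h13 : k₁ ≠ k₃) (h23 : k₂ ≠ k₃)
    (hd1 : Module.finrank k k₁ = 2) (hd2 : Module.finrank k k₂ = 2)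
    (hd3 : Module.finrank k k₃ = 2)
    (hd1' : Module.finrank k₁ K = 2) (hd2' : Module.finrank k₂ K = 2)
    (hd3' : Module.finrank k₃ K = 2) :
    hodd K * hodd k ^ 2 = hodd k₁ * hodd k₂ * hodd k₃ := by
  have : IsKleinFour (K ≃ₐ[k] K) :=
    isKleinFour_of_mulEquiv (hgal.some.trans (MulEquiv.prodMultiplicative _ _).symm)
  have hinj : Function.Injective fun F : IntermediateField k K ↦
      fixingSubgroup (K ≃ₐ[k] K) (F : Set K) :=
    (IsGaloisGroup.intermediateFieldEquivSubgroup (K ≃ₐ[k] K) k K).injective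
  have hcard (F : IntermediateField k K) (hF : Module.finrank F K = 2) :
      Nat.card (fixingSubgroup (K ≃ₐ[k] K) (F : Set K)) = 2 :=
    (IsGaloisGroup.card_fixingSubgroup_eq_finrank (K ≃ₐ[k] K) k K F).trans hF
  have hGal (F : IntermediateField k K) :
      IsGaloisGroup (fixingSubgroup (K ≃ₐ[k] K) (F : Set K)) (𝓞 F) (𝓞 K) :=
    isGaloisGroup_subgroup_ringOfIntegers _
  exact stmt19_general (A := 𝓞 k) (A₁ := 𝓞 k₁) (A₂ := 𝓞 k₂) (A₃ := 𝓞 k₃) (B := 𝓞 K)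
    (hinj.ne h12) (hinj.ne h13) (hinj.ne h23) (hcard k₁ hd1') (hcard k₂ hd2') (hcard k₃ hd3')
end
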